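/- For a dgLa L over C and a local Artinian C-algebra A with maximal ideal m_A, the simplicial set n ↦ MC(L ⊗ m_A ⊗ A^*(Δ_n)) is a Kan complex. -/

import Mathlib

/-!
STATEMENT 15: For a dgLa L over ℂ and a local Artinian ℂ-algebra A with maximal
ideal m_A, the simplicial set n ↦ MC(L ⊗ m_A ⊗ A^*(Δ_n)) is a Kan complex,
i.e. every horn of Maurer-Cartan elements can be filled.
-/

/-- A model of the polynomial de Rham algebra `A^*(Δ_n)` (see STATEMENT 4). -/
structure SimplexForms (n : ℕ) where
  A : Type
  [ringA : Ring A]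
  [algA : Algebra ℂ A]
  grading : ℕ → Submodule ℂ A
  [gradedA : GradedAlgebra grading]
  gcomm : ∀ (p q : ℕ) (a b : A), a ∈ grading p → b ∈ grading q →
    a * b = ((-1 : ℤ) ^ (p * q)) • (b * a)
  d : A →ₗ[ℂ] A
  d_mem : ∀ (q : ℕ) (a : A), a ∈ grading q → d a ∈ grading (q + 1)
  d_sq : ∀ a : A, d (d a) = 0
  leibniz : ∀ (p : ℕ) (a b : A), a ∈ grading p →
    d (a * b) = d a * b + ((-1 : ℤ) ^ p) • (a * d b)
  x : Fin (n + 1) → A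
  x_mem : ∀ i, x i ∈ grading 0
  sum_x : ∑ i, x i = 1
  sum_dx : ∑ i, d (x i) = 0

attribute [instance] SimplexForms.ringA SimplexForms.algA SimplexForms.gradedA

/-- `Ω` is the polynomial de Rham algebra `A^*(Δ_n)`: universal property. -/
def IsPolyDeRham {n : ℕ} (Ω : SimplexForms n) : Prop :=
  ∀ B : SimplexForms n, ∃! φ : Ω.A →ₐ[ℂ] B.A,
    (∀ a, φ (Ω.d a) = B.d (φ a)) ∧
    (∀ (p : ℕ) (a : Ω.A), a ∈ Ω.grading p → φ a ∈ B.grading p) ∧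
    (∀ i, φ (Ω.x i) = B.x i)

/-- The property of being the pullback morphism `a^*` induced by
`a : [n] → [m]`: a morphism of dgas (commuting with `d` and preserving the
grading) with `φ(x_j) = Σ_{i : a i = j} x_i`. -/
def PullbackProp {m n : ℕ} (Ωm : SimplexForms m) (Ωn : SimplexForms n)
    (a : Fin (n + 1) → Fin (m + 1)) (φ : Ωm.A →ₐ[ℂ] Ωn.A) : Prop :=
  (∀ y, φ (Ωm.d y) = Ωn.d (φ y)) ∧
  (∀ (p : ℕ) (y : Ωm.A), y ∈ Ωm.grading p → φ y ∈ Ωn.grading p) ∧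
  (∀ j : Fin (m + 1),
    φ (Ωm.x j) = ∑ i ∈ Finset.univ.filter (fun i => a i = j), Ωn.x i)


open TensorProduct

/-- the sign (-1)^n for n : ℤ. -/
def sgn (n : ℤ) : ℤ := ((-1 : ℤˣ) ^ n : ℤˣ)

/-- A (ℤ-graded) differential graded Lie algebra over ℂ. -/
structure GradedDGLA where
  L : Type
  [acg : AddCommGroup L]
  [mod : Module ℂ L]
  gr : ℤ → Submodule ℂ L
  br : L →ₗ[ℂ] L →ₗ[ℂ] L
  dL : L →ₗ[ℂ] L
  br_mem : ∀ (p q : ℤ) (v w : L), v ∈ gr p → w ∈ gr q → br v w ∈ gr (p + q)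
  d_mem : ∀ (p : ℤ) (v : L), v ∈ gr p → dL v ∈ gr (p + 1)
  d_sq : ∀ v : L, dL (dL v) = 0
  skew : ∀ (p q : ℤ) (v w : L), v ∈ gr p → w ∈ gr q →
    br v w = -(sgn (p * q) • br w v)
  jacobi : ∀ (p q : ℤ) (v w z : L), v ∈ gr p → w ∈ gr q →
    br v (br w z) = br (br v w) z + sgn (p * q) • br w (br v z)
  leib : ∀ (p : ℤ) (v w : L), v ∈ gr p →
    dL (br v w) = br (dL v) w + sgn p • br v (dL w)

attribute [instance] GradedDGLA.acg GradedDGLA.mod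

/-- The submodule of `L ⊗ A ⊗ A^*(Δ_k)` of elements of total degree 1 with
coefficients in the ideal `m ⊆ A`, i.e. `⊕_q L^{1-q} ⊗ m ⊗ A^q(Δ_k)`. -/
noncomputable def Deg1m (F : ∀ k, SimplexForms k) (L : GradedDGLA)
    (A : Type) [CommRing A] [Algebra ℂ A] (m : Submodule ℂ A) (k : ℕ) :
    Submodule ℂ ((L.L ⊗[ℂ] A) ⊗[ℂ] (F k).A) :=
  ⨆ q : ℕ, LinearMap.range
    (TensorProduct.map (TensorProduct.map (L.gr (1 - (q : ℤ))).subtype m.subtype)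
      ((F k).grading q).subtype)

/-- The Maurer–Cartan condition for `φ ∈ L¹(⊗ m_A ⊗ A^*(Δ_k))`, relative to
given total differential `D` and bracket `Br` on `L ⊗ A ⊗ A^*(Δ_k)`. -/
def IsMCsimp (F : ∀ k, SimplexForms k) (L : GradedDGLA)
    (A : Type) [CommRing A] [Algebra ℂ A] (m : Submodule ℂ A)
    (D : ∀ k, (L.L ⊗[ℂ] A) ⊗[ℂ] (F k).A →ₗ[ℂ] (L.L ⊗[ℂ] A) ⊗[ℂ] (F k).A)
    (Br : ∀ k, (L.L ⊗[ℂ] A) ⊗[ℂ] (F k).A →ₗ[ℂ]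
      (L.L ⊗[ℂ] A) ⊗[ℂ] (F k).A →ₗ[ℂ] (L.L ⊗[ℂ] A) ⊗[ℂ] (F k).A)
    (k : ℕ) (φ : (L.L ⊗[ℂ] A) ⊗[ℂ] (F k).A) : Prop :=
  φ ∈ Deg1m F L A m k ∧ D k φ + (1 / 2 : ℂ) • Br k φ φ = 0

set_option linter.unusedSectionVars false
/-! ### The sign involution of a graded algebra -/
section Cylinder
variable {C : Type} [Ring C] [Algebra ℂ C] (G : ℕ → Submodule ℂ C) [GradedAlgebra G]

/-- The sign involution as a linear map. -/
noncomputable def sigL : C →ₗ[ℂ] C :=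
  DirectSum.toModule ℂ ℕ C (fun i => ((-1 : ℤ) ^ i) • (G i).subtype) ∘ₗ
    (DirectSum.decomposeLinearEquiv G).toLinearMap

theorem sigL_of_mem {q : ℕ} {a : C} (ha : a ∈ G q) : sigL G a = ((-1 : ℤ) ^ q) • a := by
  simp only [sigL, LinearMap.comp_apply, LinearEquiv.coe_coe,
    DirectSum.decomposeLinearEquiv_apply]
  rw [DirectSum.decompose_of_mem G ha]
  erw [DirectSum.toModule_lof ℂ]
  rfl

theorem sigL_mem {q : ℕ} {a : C} (ha : a ∈ G q) : sigL G a ∈ G q := by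
  rw [sigL_of_mem G ha]
  exact zsmul_mem ha _

theorem sigL_one : sigL G 1 = 1 := by
  rw [sigL_of_mem G (SetLike.GradedOne.one_mem)]
  simp

theorem sigL_sigL (a : C) : sigL G (sigL G a) = a := by
  induction a using DirectSum.Decomposition.inductionOn G with
  | zero => simp
  | homogeneous a =>
    rw [sigL_of_mem G a.2, map_zsmul, sigL_of_mem G a.2, smul_smul, ← mul_pow]
    simp
  | add a b ha hb => rw [map_add, map_add, ha, hb]

theorem sigL_mul (a b : C) : sigL G (a * b) = sigL G a * sigL G b := by
  induction a using DirectSum.Decomposition.inductionOn G with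
  | zero => simp
  | add a a' ha ha' => rw [add_mul, map_add, map_add, ha, ha', add_mul]
  | @homogeneous p a =>
    induction b using DirectSum.Decomposition.inductionOn G with
    | zero => simp
    | add b b' hb hb' => rw [mul_add, map_add, map_add, hb, hb', mul_add]
    | @homogeneous q b =>
      rw [sigL_of_mem G a.2, sigL_of_mem G b.2,
        sigL_of_mem G (SetLike.GradedMul.mul_mem a.2 b.2), pow_add]
      rw [smul_mul_smul_comm]

/-- a degree `s` map commutes with the sign up to `(-1)^s` -/
theorem sigL_comm {C' : Type} [Ring C'] [Algebra ℂ C'] (G' : ℕ → Submodule ℂ C')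
    [GradedAlgebra G'] (f : C →ₗ[ℂ] C') (hf : ∀ q a, a ∈ G q → f a ∈ G' q) (a : C) :
    sigL G' (f a) = f (sigL G a) := by
  induction a using DirectSum.Decomposition.inductionOn G with
  | zero => simp
  | homogeneous a =>
    rw [sigL_of_mem G a.2, map_zsmul, sigL_of_mem G' (hf _ _ a.2)]
  | add a b ha hb => simp only [map_add, ha, hb]

theorem sigL_anticomm (f : C →ₗ[ℂ] C) (hf : ∀ q a, a ∈ G q → f a ∈ G (q + 1)) (a : C) :
    sigL G (f a) = - f (sigL G a) := by
  induction a using DirectSum.Decomposition.inductionOn G with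
  | zero => simp
  | homogeneous a =>
    rw [sigL_of_mem G a.2, map_zsmul, sigL_of_mem G (hf _ _ a.2), pow_succ]
    simp
  | add a b ha hb => simp only [map_add, ha, hb]; abel

/-! ### The algebra `C ⊕ C dt` -/

/-- The algebra `C[dt]`. The pair `(a, b)` stands for `a + b dt`. -/
def Cyl (_G : ℕ → Submodule ℂ C) : Type := C × C

instance : AddCommGroup (Cyl G) := inferInstanceAs (AddCommGroup (C × C))
instance cylMod : Module ℂ (Cyl G) := inferInstanceAs (Module ℂ (C × C))

namespace Cyl
variable {G}
/-- function part -/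
def fst : Cyl G →ₗ[ℂ] C := LinearMap.fst ℂ C C
/-- dt part -/
def snd : Cyl G →ₗ[ℂ] C := LinearMap.snd ℂ C C
/-- constructor -/
def mk (a b : C) : Cyl G := (a, b)
@[simp] theorem fst_mk (a b : C) : fst (mk a b : Cyl G) = a := rfl
@[simp] theorem snd_mk (a b : C) : snd (mk a b : Cyl G) = b := rfl
theorem ext {x y : Cyl G} (h1 : fst x = fst y) (h2 : snd x = snd y) : x = y :=
  Prod.ext h1 h2

noncomputable instance : Mul (Cyl G) :=
  ⟨fun x y => mk (fst x * fst y) (fst x * snd y + snd x * sigL G (fst y))⟩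
instance : One (Cyl G) := ⟨mk 1 0⟩

@[simp] theorem fst_mul (x y : Cyl G) : fst (x * y) = fst x * fst y := rfl
@[simp] theorem snd_mul (x y : Cyl G) :
    snd (x * y) = fst x * snd y + snd x * sigL G (fst y) := rfl
@[simp] theorem fst_one : fst (1 : Cyl G) = 1 := rfl
@[simp] theorem snd_one : snd (1 : Cyl G) = 0 := rfl

noncomputable instance : Ring (Cyl G) :=
  { (inferInstance : AddCommGroup (Cyl G)) with
    mul := (· * ·)
    one := 1
    left_distrib := fun a b c => by
      apply ext <;> simp [mul_add]; abel
    right_distrib := fun a b c => by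
      apply ext <;> simp [add_mul]; abel
    zero_mul := fun a => by apply ext <;> simp
    mul_zero := fun a => by apply ext <;> simp
    mul_assoc := fun a b c => by
      apply ext <;> simp [mul_assoc, sigL_mul, mul_add, add_mul]; abel
    one_mul := fun a => by apply ext <;> simp
    mul_one := fun a => by apply ext <;> simp [sigL_one]
    zsmul := fun n x => n • x
    zsmul_zero' := fun x => zero_zsmul x
    zsmul_succ' := fun n x => SubNegMonoid.zsmul_succ' n x
    zsmul_neg' := fun n x => SubNegMonoid.zsmul_neg' n x
    nsmul := fun n x => n • x
    nsmul_zero := fun x => zero_nsmul x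
    nsmul_succ := fun n x => succ_nsmul x n }

noncomputable instance : Algebra ℂ (Cyl G) :=
  Algebra.ofModule (fun r x y => by apply ext <;> simp)
    (fun r x y => by apply ext <;> simp)

variable (G) in
/-- The shifted grading -/
def shift : ℕ → Submodule ℂ C
  | 0 => ⊥
  | q + 1 => G q

variable (G) in
/-- The grading of `Cyl`. -/
noncomputable def gr (q : ℕ) : Submodule ℂ (Cyl G) := (G q).comap fst ⊓ (shift G q).comap snd

theorem mem_gr {q : ℕ} {x : Cyl G} : x ∈ gr G q ↔ fst x ∈ G q ∧ snd x ∈ shift G q := Iff.rfl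

theorem shift_mul_left {p q : ℕ} {a b : C} (ha : a ∈ G p) (hb : b ∈ shift G q) :
    a * b ∈ shift G (p + q) := by
  cases q with
  | zero => 
    have : b = 0 := hb
    simp [this]
  | succ q => exact SetLike.GradedMul.mul_mem (A := G) (i := p) (j := q) ha hb

theorem shift_mul_right {p q : ℕ} {a b : C} (ha : a ∈ shift G p) (hb : b ∈ G q) :
    a * b ∈ shift G (p + q) := by
  cases p with
  | zero =>
    have : a = 0 := ha
    simp [this]
  | succ p =>
    have : p + 1 + q = (p + q) + 1 := by omega
    rw [this]
    exact SetLike.GradedMul.mul_mem (A := G) (i := p) (j := q) ha hb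

variable (G) in
/-- inclusion of functions, graded -/
noncomputable def inlG (q : ℕ) : G q →ₗ[ℂ] gr G q :=
  LinearMap.codRestrict (gr G q) (LinearMap.inl ℂ C C ∘ₗ (G q).subtype)
    (fun a => ⟨a.2, Submodule.zero_mem _⟩)

variable (G) in
/-- inclusion of `dt`-part, graded -/
noncomputable def inrG (q : ℕ) : G q →ₗ[ℂ] gr G (q + 1) :=
  LinearMap.codRestrict (gr G (q + 1)) (LinearMap.inr ℂ C C ∘ₗ (G q).subtype)
    (fun a => ⟨Submodule.zero_mem _, a.2⟩)

variable (G) in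
/-- first part of the decomposition -/
noncomputable def dec1 : DirectSum ℕ (fun i => G i) →ₗ[ℂ] DirectSum ℕ (fun i => gr G i) :=
  DirectSum.toModule ℂ ℕ _ (fun q => (DirectSum.lof ℂ ℕ (fun i => gr G i) q) ∘ₗ inlG G q)

variable (G) in
/-- second part of the decomposition -/
noncomputable def dec2 : DirectSum ℕ (fun i => G i) →ₗ[ℂ] DirectSum ℕ (fun i => gr G i) :=
  DirectSum.toModule ℂ ℕ _ (fun q => (DirectSum.lof ℂ ℕ (fun i => gr G i) (q + 1)) ∘ₗ inrG G q)

theorem coe_dec1 (z : DirectSum ℕ (fun i => G i)) :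
    DirectSum.coeLinearMap (gr G) (dec1 G z) = mk (DirectSum.coeLinearMap G z) 0 := by
  induction z using DirectSum.induction_on with
  | zero => simp only [map_zero]; rfl
  | of i a =>
    have e1 : dec1 G (DirectSum.of (fun i => G i) i a) =
      DirectSum.lof ℂ ℕ (fun i => gr G i) i (inlG G i a) :=
      DirectSum.toModule_lof ℂ i _
    have e2 : DirectSum.coeLinearMap G (DirectSum.of (fun i => G i) i a) = a :=
      DirectSum.coeLinearMap_lof G i a
    rw [e1, e2, DirectSum.coeLinearMap_lof]
    rfl
  | add x y hx hy =>
    simp only [map_add, hx, hy]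
    apply ext <;> simp

theorem coe_dec2 (z : DirectSum ℕ (fun i => G i)) :
    DirectSum.coeLinearMap (gr G) (dec2 G z) = mk 0 (DirectSum.coeLinearMap G z) := by
  induction z using DirectSum.induction_on with
  | zero => simp only [map_zero]; rfl
  | of i a =>
    have e1 : dec2 G (DirectSum.of (fun i => G i) i a) =
      DirectSum.lof ℂ ℕ (fun i => gr G i) (i + 1) (inrG G i a) :=
      DirectSum.toModule_lof ℂ i _
    have e2 : DirectSum.coeLinearMap G (DirectSum.of (fun i => G i) i a) = a :=
      DirectSum.coeLinearMap_lof G i a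
    rw [e1, e2, DirectSum.coeLinearMap_lof]
    rfl
  | add x y hx hy =>
    simp only [map_add, hx, hy]
    apply ext <;> simp

variable (G) in
/-- the decomposition map -/
noncomputable def dec (x : Cyl G) : DirectSum ℕ (fun i => gr G i) :=
  dec1 G (DirectSum.decompose G (fst x)) + dec2 G (DirectSum.decompose G (snd x))

theorem dec_add (x y : Cyl G) : dec G (x + y) = dec G x + dec G y := by
  simp only [dec, map_add, DirectSum.decompose_add]; abel

theorem coe_decompose (a : C) : DirectSum.coeLinearMap G (DirectSum.decompose G a) = a :=
  DirectSum.Decomposition.left_inv a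

theorem coe_dec (x : Cyl G) : DirectSum.coeLinearMap (gr G) (dec G x) = x := by
  rw [dec, map_add, coe_dec1, coe_dec2, coe_decompose, coe_decompose]
  apply ext <;> simp

theorem dec_of_mem (i : ℕ) (x : gr G i) : dec G x.1 = DirectSum.lof ℂ ℕ (fun i => gr G i) i x := by
  obtain ⟨x, hx⟩ := x
  obtain ⟨h1, h2⟩ := mem_gr.1 hx
  simp only [dec]
  rw [DirectSum.decompose_of_mem G h1]
  have e1 : dec1 G (DirectSum.of (fun i => G i) i ⟨fst x, h1⟩) =
      DirectSum.lof ℂ ℕ (fun i => gr G i) i (inlG G i ⟨fst x, h1⟩) :=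
    DirectSum.toModule_lof ℂ i _
  rw [e1]
  cases i with
  | zero =>
    have h0 : snd x = 0 := h2
    rw [h0, DirectSum.decompose_zero, map_zero, add_zero]
    congr 1
    apply Subtype.ext
    exact ext rfl h0.symm
  | succ i =>
    have h2' : snd x ∈ G i := h2
    rw [DirectSum.decompose_of_mem G h2']
    have e2 : dec2 G (DirectSum.of (fun i => G i) i ⟨snd x, h2'⟩) =
        DirectSum.lof ℂ ℕ (fun i => gr G i) (i + 1) (inrG G i ⟨snd x, h2'⟩) :=
      DirectSum.toModule_lof ℂ i _
    rw [e2, ← map_add]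
    congr 1
    apply Subtype.ext
    apply ext
    · exact add_zero (fst x)
    · exact zero_add (snd x)

noncomputable instance : DirectSum.Decomposition (gr G) where
  decompose' := dec G
  left_inv := coe_dec
  right_inv := fun z => by
    induction z using DirectSum.induction_on with
    | zero => simp [dec]
    | of i x => 
      rw [DirectSum.coeAddMonoidHom_of]
      exact dec_of_mem i x
    | add x y hx hy => rw [map_add, dec_add, hx, hy]

noncomputable instance : GradedAlgebra (gr G) where
  one_mem := mem_gr.2 ⟨SetLike.GradedOne.one_mem (A := G), by simp⟩
  mul_mem := fun p q x y hx hy => mem_gr.2 ⟨SetLike.GradedMul.mul_mem (A := G) hx.1 hy.1,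
    Submodule.add_mem _ (shift_mul_left hx.1 hy.2) (shift_mul_right hx.2 (sigL_mem G hy.1))⟩

end Cyl
end Cylinder

set_option linter.unusedSectionVars false

namespace Cyl
variable {C : Type} [Ring C] [Algebra ℂ C] (G : ℕ → Submodule ℂ C) [GradedAlgebra G]

/-- The differential on `C ⊕ C dt`. -/
noncomputable def dC (d del : C →ₗ[ℂ] C) : Cyl G →ₗ[ℂ] Cyl G where
  toFun x := mk (d (fst x)) (sigL G (del (fst x)) + d (snd x))
  map_add' x y := by apply ext <;> simp; abel
  map_smul' r x := by apply ext <;> simp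

variable {G}
@[simp] theorem fst_dC (d del : C →ₗ[ℂ] C) (x : Cyl G) : fst (dC G d del x) = d (fst x) := rfl
@[simp] theorem snd_dC (d del : C →ₗ[ℂ] C) (x : Cyl G) :
    snd (dC G d del x) = sigL G (del (fst x)) + d (snd x) := rfl

variable (gcomm : ∀ (p q : ℕ) (a b : C), a ∈ G p → b ∈ G q →
    a * b = ((-1 : ℤ) ^ (p * q)) • (b * a))
  (d : C →ₗ[ℂ] C) (d_mem : ∀ (q : ℕ) (a : C), a ∈ G q → d a ∈ G (q + 1))
  (d_sq : ∀ a, d (d a) = 0)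
  (leibniz : ∀ (p : ℕ) (a b : C), a ∈ G p → d (a * b) = d a * b + ((-1 : ℤ) ^ p) • (a * d b))
  (del : C →ₗ[ℂ] C) (del_mem : ∀ (q : ℕ) (a : C), a ∈ G q → del a ∈ G q)
  (del_mul : ∀ a b, del (a * b) = del a * b + a * del b)
  (del_d : ∀ a, del (d a) = d (del a))

include gcomm in
theorem cyl_gcomm (p q : ℕ) (x y : Cyl G) (hx : x ∈ gr G p) (hy : y ∈ gr G q) :
    x * y = ((-1 : ℤ) ^ (p * q)) • (y * x) := by
  obtain ⟨h1, h2⟩ := mem_gr.1 hx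
  obtain ⟨h3, h4⟩ := mem_gr.1 hy
  apply ext
  · simp only [map_zsmul, fst_mul]
    exact gcomm p q _ _ h1 h3
  · simp only [map_zsmul, snd_mul]
    rw [sigL_of_mem G h1, sigL_of_mem G h3]
    have e1 : fst x * snd y = ((-1 : ℤ) ^ (p * q)) • (snd y * ((-1 : ℤ) ^ p) • fst x) := by
      cases q with
      | zero =>
        have : snd y = 0 := h4
        simp [this]
      | succ q =>
        rw [gcomm p q _ _ h1 h4, mul_smul_comm, smul_smul]
        congr 1
        rw [mul_add, pow_add, mul_assoc, mul_one, ← mul_pow]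
        simp
    have e2 : snd x * ((-1 : ℤ) ^ q) • fst y = ((-1 : ℤ) ^ (p * q)) • (fst y * snd x) := by
      cases p with
      | zero =>
        have : snd x = 0 := h2
        simp [this]
      | succ p =>
        rw [mul_smul_comm, gcomm p q _ _ h2 h3, smul_smul]
        congr 1
        rw [add_mul, pow_add, one_mul, mul_comm]
    rw [e1, e2, smul_add, add_comm]

include d_mem del_mem in
theorem cyl_d_mem (q : ℕ) (x : Cyl G) (hx : x ∈ gr G q) : dC G d del x ∈ gr G (q + 1) := by
  obtain ⟨h1, h2⟩ := mem_gr.1 hx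
  refine mem_gr.2 ⟨d_mem _ _ h1, Submodule.add_mem (G q) (sigL_mem G (del_mem _ _ h1)) ?_⟩
  cases q with
  | zero =>
    have : snd x = 0 := h2
    simp [this]
  | succ q => exact d_mem _ _ h2

include d_mem d_sq del_mem del_d in
theorem cyl_d_sq (x : Cyl G) : dC G d del (dC G d del x) = 0 := by
  apply ext
  · simp [d_sq]
  · simp only [snd_dC, fst_dC, map_add, d_sq, map_zero, add_zero]
    rw [del_d, sigL_anticomm G d d_mem]
    simp

include d_mem leibniz del_mem del_mul in
theorem cyl_leibniz (p : ℕ) (x y : Cyl G) (hx : x ∈ gr G p) :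
    dC G d del (x * y) = dC G d del x * y + ((-1 : ℤ) ^ p) • (x * dC G d del y) := by
  obtain ⟨h1, h2⟩ := mem_gr.1 hx
  apply ext
  · simp only [fst_dC, fst_mul, map_add, map_zsmul]
    exact leibniz _ _ _ h1
  · simp only [fst_dC, snd_dC, snd_mul, fst_mul, map_add, map_zsmul, del_mul, sigL_mul]
    rw [leibniz _ _ _ h1, sigL_of_mem G h1, sigL_anticomm G d d_mem (fst y)]
    have e : d (snd x * sigL G (fst y)) = d (snd x) * sigL G (fst y) -
        ((-1 : ℤ) ^ p) • (snd x * d (sigL G (fst y))) := by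
      cases p with
      | zero =>
        have : snd x = 0 := h2
        simp [this]
      | succ p =>
        rw [leibniz p _ _ h2, pow_succ]
        simp
    rw [e]
    rcases neg_one_pow_eq_or ℤ p with h | h <;> rw [h] <;>
      simp only [one_smul, neg_smul, mul_add, add_mul, mul_neg, neg_mul] <;> abel

end Cyl

/-! ### `ℂ[t] ⊗ Ω` -/
section Poly
open Polynomial
variable {n : ℕ} (Ω : SimplexForms n)

theorem SimplexForms.d_one : Ω.d 1 = 0 := by
  have := Ω.leibniz 0 1 1 SetLike.GradedOne.one_mem
  simpa using this

/-- `ℂ[t] ⊗ Ω` -/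
abbrev PA : Type := ℂ[X] ⊗[ℂ] Ω.A

/-- grading on `ℂ[t] ⊗ Ω` -/
noncomputable def PG (q : ℕ) : Submodule ℂ (PA Ω) :=
  ((Ω.grading q).baseChange ℂ[X]).restrictScalars ℂ

noncomputable instance : GradedAlgebra (PG Ω) where
  one_mem := SetLike.GradedOne.one_mem (A := fun i => (Ω.grading i).baseChange ℂ[X])
  mul_mem := SetLike.GradedMul.mul_mem (A := fun i => (Ω.grading i).baseChange ℂ[X])
  decompose' := (DirectSum.Decomposition.decompose' 
    (ℳ := fun i => (Ω.grading i).baseChange ℂ[X]))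
  left_inv := DirectSum.Decomposition.left_inv (ℳ := fun i => (Ω.grading i).baseChange ℂ[X])
  right_inv := DirectSum.Decomposition.right_inv (ℳ := fun i => (Ω.grading i).baseChange ℂ[X])

variable {Ω}
theorem tmul_mem_PG {q : ℕ} (p : ℂ[X]) {a : Ω.A} (ha : a ∈ Ω.grading q) :
    p ⊗ₜ[ℂ] a ∈ PG Ω q := Submodule.tmul_mem_baseChange_of_mem _ ha

theorem PG_induction {q : ℕ} {motive : (x : PA Ω) → x ∈ PG Ω q → Prop}
    (h0 : motive 0 (Submodule.zero_mem _))
    (hadd : ∀ x y hx hy, motive x hx → motive y hy → motive (x + y) (Submodule.add_mem _ hx hy))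
    (ht : ∀ (p : ℂ[X]) (a : Ω.A) (ha : a ∈ Ω.grading q), motive (p ⊗ₜ a) (tmul_mem_PG p ha))
    (x : PA Ω) (hx : x ∈ PG Ω q) : motive x hx := by
  have key : ∀ y, ∃ h, motive ((Ω.grading q).subtype.baseChange ℂ[X] y) h := by
    intro y
    induction y using TensorProduct.induction_on with
    | zero => simpa using h0
    | tmul p a => exact ⟨_, ht p a a.2⟩
    | add x y h1 h2 =>
      rw [map_add]
      exact ⟨_, hadd _ _ _ _ h1.2 h2.2⟩
  obtain ⟨y, rfl⟩ : ∃ y, (Ω.grading q).subtype.baseChange ℂ[X] y = x := hx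
  exact (key y).2

variable (Ω)
/-- coefficientwise differential -/
noncomputable def Pd : PA Ω →ₗ[ℂ] PA Ω := LinearMap.lTensor ℂ[X] Ω.d
/-- derivative with respect to `t` -/
noncomputable def Pdel : PA Ω →ₗ[ℂ] PA Ω := LinearMap.rTensor Ω.A Polynomial.derivative
variable {Ω}

@[simp] theorem Pd_tmul (p : ℂ[X]) (a : Ω.A) : Pd Ω (p ⊗ₜ a) = p ⊗ₜ Ω.d a := rfl
@[simp] theorem Pdel_tmul (p : ℂ[X]) (a : Ω.A) :
    Pdel Ω (p ⊗ₜ a) = Polynomial.derivative p ⊗ₜ a := rfl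

theorem P_gcomm (p q : ℕ) (a b : PA Ω) (ha : a ∈ PG Ω p) (hb : b ∈ PG Ω q) :
    a * b = ((-1 : ℤ) ^ (p * q)) • (b * a) := by
  induction a, ha using PG_induction with
  | h0 => simp
  | hadd x y _ _ hx hy => rw [add_mul, mul_add, hx, hy, smul_add]
  | ht f a ha =>
    induction b, hb using PG_induction with
    | h0 => simp
    | hadd x y _ _ hx hy => rw [add_mul, mul_add, hx, hy, smul_add]
    | ht g b hb =>
      rw [Algebra.TensorProduct.tmul_mul_tmul, Algebra.TensorProduct.tmul_mul_tmul,
        Ω.gcomm p q a b ha hb, mul_comm f g]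
      rcases neg_one_pow_eq_or ℤ (p * q) with h | h <;> rw [h] <;> simp [TensorProduct.tmul_neg]

theorem Pd_mem (q : ℕ) (a : PA Ω) (ha : a ∈ PG Ω q) : Pd Ω a ∈ PG Ω (q + 1) := by
  induction a, ha using PG_induction with
  | h0 => simp
  | hadd x y _ _ hx hy => rw [map_add]; exact Submodule.add_mem _ hx hy
  | ht f a ha => exact tmul_mem_PG f (Ω.d_mem _ _ ha)

theorem Pdel_mem (q : ℕ) (a : PA Ω) (ha : a ∈ PG Ω q) : Pdel Ω a ∈ PG Ω q := by
  induction a, ha using PG_induction with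
  | h0 => simp
  | hadd x y _ _ hx hy => rw [map_add]; exact Submodule.add_mem _ hx hy
  | ht f a ha => exact tmul_mem_PG _ ha

theorem Pd_sq (a : PA Ω) : Pd Ω (Pd Ω a) = 0 := by
  induction a using TensorProduct.induction_on with
  | zero => simp
  | tmul p a => simp [Ω.d_sq]
  | add x y hx hy => simp [hx, hy]

theorem P_leibniz (p : ℕ) (a b : PA Ω) (ha : a ∈ PG Ω p) :
    Pd Ω (a * b) = Pd Ω a * b + ((-1 : ℤ) ^ p) • (a * Pd Ω b) := by
  induction a, ha using PG_induction with
  | h0 => simp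
  | hadd x y _ _ hx hy => simp only [add_mul, map_add, hx, hy, smul_add]; abel
  | ht f a ha =>
    induction b using TensorProduct.induction_on with
    | zero => simp
    | add x y hx hy => simp only [mul_add, map_add, hx, hy, smul_add]; abel
    | tmul g b =>
      simp only [Algebra.TensorProduct.tmul_mul_tmul, Pd_tmul, Ω.leibniz p a b ha,
        TensorProduct.tmul_add]
      rcases neg_one_pow_eq_or ℤ p with h | h <;> rw [h] <;> simp [TensorProduct.tmul_neg]

theorem Pdel_mul (a b : PA Ω) : Pdel Ω (a * b) = Pdel Ω a * b + a * Pdel Ω b := by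
  induction a using TensorProduct.induction_on with
  | zero => simp
  | add x y hx hy => simp only [add_mul, map_add, hx, hy]; abel
  | tmul f a =>
    induction b using TensorProduct.induction_on with
    | zero => simp
    | add x y hx hy => simp only [mul_add, map_add, hx, hy]; abel
    | tmul g b =>
      simp [Algebra.TensorProduct.tmul_mul_tmul, TensorProduct.add_tmul]

theorem Pdel_Pd (a : PA Ω) : Pdel Ω (Pd Ω a) = Pd Ω (Pdel Ω a) := by
  induction a using TensorProduct.induction_on with
  | zero => simp
  | tmul p a => simp
  | add x y hx hy => simp [hx, hy]

variable (Ω) in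
/-- The simplicial coordinates of the contraction onto the vertex `k`. -/
noncomputable def Px (k i : Fin (n + 1)) : PA Ω :=
  (X : ℂ[X]) ⊗ₜ Ω.x i + if i = k then ((1 - X : ℂ[X]) ⊗ₜ 1) else 0

theorem Px_mem (k i : Fin (n + 1)) : Px Ω k i ∈ PG Ω 0 := by
  refine Submodule.add_mem _ (tmul_mem_PG _ (Ω.x_mem i)) ?_
  split_ifs
  · exact tmul_mem_PG _ SetLike.GradedOne.one_mem
  · exact Submodule.zero_mem _

theorem sum_Px (k : Fin (n + 1)) : ∑ i, Px Ω k i = 1 := by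
  simp only [Px, Finset.sum_add_distrib, Finset.sum_ite_eq', Finset.mem_univ, if_true]
  rw [← TensorProduct.tmul_sum, Ω.sum_x, ← TensorProduct.add_tmul]
  simp [Algebra.TensorProduct.one_def]

variable (Ω) in
/-- The cylinder dga with the coordinates of the contraction onto vertex `k`. -/
noncomputable def cylForms (k : Fin (n + 1)) : SimplexForms n where
  A := Cyl (PG Ω)
  grading := Cyl.gr (PG Ω)
  gcomm := Cyl.cyl_gcomm P_gcomm
  d := Cyl.dC (PG Ω) (Pd Ω) (Pdel Ω)
  d_mem := Cyl.cyl_d_mem _ Pd_mem _ Pdel_mem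
  d_sq := Cyl.cyl_d_sq _ Pd_mem Pd_sq _ Pdel_mem Pdel_Pd
  leibniz := Cyl.cyl_leibniz _ Pd_mem P_leibniz _ Pdel_mem Pdel_mul
  x := fun i => Cyl.mk (Px Ω k i) 0
  x_mem := fun i => Cyl.mem_gr.2 ⟨Px_mem k i, Submodule.zero_mem _⟩
  sum_x := by
    apply Cyl.ext
    · simp only [map_sum, Cyl.fst_mk, sum_Px, Cyl.fst_one]
    · simp
  sum_dx := by
    rw [← map_sum]
    have : ∑ i, (Cyl.mk (Px Ω k i) 0 : Cyl (PG Ω)) = 1 := by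
      apply Cyl.ext
      · simp only [map_sum, Cyl.fst_mk, sum_Px, Cyl.fst_one]
      · simp
    rw [this]
    apply Cyl.ext
    · simp [Algebra.TensorProduct.one_def, Ω.d_one]
    · simp [Algebra.TensorProduct.one_def, Ω.d_one]

/-! ### Integration and evaluation -/

/-- `∫₀¹` of polynomials -/
noncomputable def pint : ℂ[X] →ₗ[ℂ] ℂ :=
  Polynomial.lsum (fun i => ((1 : ℂ) / (i + 1)) • LinearMap.id)

theorem pint_derivative (p : ℂ[X]) :
    pint (Polynomial.derivative p) = p.eval 1 - p.eval 0 := by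
  induction p using Polynomial.induction_on' with
  | add p q hp hq => simp only [map_add, hp, hq, Polynomial.eval_add]; ring
  | monomial i a =>
    rw [Polynomial.derivative_monomial]
    cases i with
    | zero => simp
    | succ i =>
      have : (i : ℂ) + 1 ≠ 0 := by exact_mod_cast Nat.succ_ne_zero i
      simp [pint, Polynomial.lsum_apply, Polynomial.sum_monomial_index]
      field_simp

variable (Ω) in
/-- fibre integration on functions -/
noncomputable def Pint : PA Ω →ₗ[ℂ] Ω.A :=
  (TensorProduct.lid ℂ Ω.A).toLinearMap ∘ₗ LinearMap.rTensor Ω.A pint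

@[simp] theorem Pint_tmul (p : ℂ[X]) (a : Ω.A) : Pint Ω (p ⊗ₜ a) = pint p • a := by
  simp [Pint]

variable (Ω) in
/-- evaluation at `t = s` -/
noncomputable def Pev (s : ℂ) : PA Ω →ₐ[ℂ] Ω.A :=
  (Algebra.TensorProduct.lid ℂ Ω.A).toAlgHom.comp
    (Algebra.TensorProduct.map (Polynomial.aeval s) (AlgHom.id ℂ Ω.A))

@[simp] theorem Pev_tmul (s : ℂ) (p : ℂ[X]) (a : Ω.A) : Pev Ω s (p ⊗ₜ a) = p.eval s • a := by
  simp [Pev]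

theorem Pint_mem (q : ℕ) (a : PA Ω) (ha : a ∈ PG Ω q) : Pint Ω a ∈ Ω.grading q := by
  induction a, ha using PG_induction with
  | h0 => simp
  | hadd x y _ _ hx hy => rw [map_add]; exact Submodule.add_mem _ hx hy
  | ht f a ha => rw [Pint_tmul]; exact Submodule.smul_mem _ _ ha

theorem Pev_mem (s : ℂ) (q : ℕ) (a : PA Ω) (ha : a ∈ PG Ω q) : Pev Ω s a ∈ Ω.grading q := by
  induction a, ha using PG_induction with
  | h0 => simp
  | hadd x y _ _ hx hy => rw [map_add]; exact Submodule.add_mem _ hx hy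
  | ht f a ha => rw [Pev_tmul]; exact Submodule.smul_mem _ _ ha

theorem Pint_Pd (a : PA Ω) : Pint Ω (Pd Ω a) = Ω.d (Pint Ω a) := by
  induction a using TensorProduct.induction_on with
  | zero => simp
  | tmul p a => simp
  | add x y hx hy => simp only [map_add, hx, hy]

theorem Pev_Pd (s : ℂ) (a : PA Ω) : Pev Ω s (Pd Ω a) = Ω.d (Pev Ω s a) := by
  induction a using TensorProduct.induction_on with
  | zero => simp
  | tmul p a => simp
  | add x y hx hy => simp only [map_add, hx, hy]

theorem Pint_Pdel (a : PA Ω) : Pint Ω (Pdel Ω a) = Pev Ω 1 a - Pev Ω 0 a := by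
  induction a using TensorProduct.induction_on with
  | zero => simp
  | tmul p a => simp [pint_derivative, sub_smul]
  | add x y hx hy => simp only [map_add, hx, hy]; abel

variable (Ω) in
/-- fibre integration -/
noncomputable def cylInt : Cyl (PG Ω) →ₗ[ℂ] Ω.A :=
  Pint Ω ∘ₗ sigL (PG Ω) ∘ₗ Cyl.snd

theorem cylInt_stokes (x : Cyl (PG Ω)) :
    Ω.d (cylInt Ω x) + cylInt Ω (Cyl.dC (PG Ω) (Pd Ω) (Pdel Ω) x) =
      Pev Ω 1 (Cyl.fst x) - Pev Ω 0 (Cyl.fst x) := by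
  simp only [cylInt, LinearMap.comp_apply, Cyl.snd_dC, map_add, sigL_sigL, Pint_Pdel]
  rw [sigL_anticomm _ _ Pd_mem, map_neg, Pint_Pd]
  abel

variable (Ω) in
/-- evaluation on the cylinder -/
noncomputable def cylEv (s : ℂ) : Cyl (PG Ω) →ₐ[ℂ] Ω.A :=
  AlgHom.ofLinearMap ((Pev Ω s).toLinearMap ∘ₗ Cyl.fst) (by simp) (by simp)

theorem cylEv_apply (s : ℂ) (x : Cyl (PG Ω)) : cylEv Ω s x = Pev Ω s (Cyl.fst x) := rfl

/-! ### Functoriality of the cylinder -/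
variable {m : ℕ} {Ω' : SimplexForms m}

/-- base change of an algebra map -/
noncomputable def Pmap (f : Ω.A →ₐ[ℂ] Ω'.A) : PA Ω →ₐ[ℂ] PA Ω' :=
  Algebra.TensorProduct.map (AlgHom.id ℂ ℂ[X]) f

@[simp] theorem Pmap_tmul (f : Ω.A →ₐ[ℂ] Ω'.A) (p : ℂ[X]) (a : Ω.A) :
    Pmap f (p ⊗ₜ a) = p ⊗ₜ f a := rfl

theorem Pmap_mem (f : Ω.A →ₐ[ℂ] Ω'.A) (hf : ∀ q a, a ∈ Ω.grading q → f a ∈ Ω'.grading q)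
    (q : ℕ) (a : PA Ω) (ha : a ∈ PG Ω q) : Pmap f a ∈ PG Ω' q := by
  induction a, ha using PG_induction with
  | h0 => simp
  | hadd x y _ _ hx hy => rw [map_add]; exact Submodule.add_mem _ hx hy
  | ht g a ha => rw [Pmap_tmul]; exact tmul_mem_PG _ (hf _ _ ha)

theorem Pmap_Pd (f : Ω.A →ₐ[ℂ] Ω'.A) (hf : ∀ a, f (Ω.d a) = Ω'.d (f a)) (a : PA Ω) :
    Pmap f (Pd Ω a) = Pd Ω' (Pmap f a) := by
  induction a using TensorProduct.induction_on with
  | zero => simp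
  | tmul p a => simp [hf]
  | add x y hx hy => simp only [map_add, hx, hy]

theorem Pmap_Pdel (f : Ω.A →ₐ[ℂ] Ω'.A) (a : PA Ω) :
    Pmap f (Pdel Ω a) = Pdel Ω' (Pmap f a) := by
  induction a using TensorProduct.induction_on with
  | zero => simp
  | tmul p a => simp
  | add x y hx hy => simp only [map_add, hx, hy]

theorem Pmap_Pint (f : Ω.A →ₐ[ℂ] Ω'.A) (a : PA Ω) :
    f (Pint Ω a) = Pint Ω' (Pmap f a) := by
  induction a using TensorProduct.induction_on with
  | zero => simp
  | tmul p a => simp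
  | add x y hx hy => simp only [map_add, hx, hy]

theorem sigL_Pmap (f : Ω.A →ₐ[ℂ] Ω'.A) (hf : ∀ q a, a ∈ Ω.grading q → f a ∈ Ω'.grading q)
    (a : PA Ω) : sigL (PG Ω') (Pmap f a) = Pmap f (sigL (PG Ω) a) :=
  sigL_comm (PG Ω) (PG Ω') (Pmap f).toLinearMap (Pmap_mem f hf) a

/-- cylinder of a map -/
noncomputable def cylMap (f : Ω.A →ₐ[ℂ] Ω'.A)
    (hf : ∀ q a, a ∈ Ω.grading q → f a ∈ Ω'.grading q) : Cyl (PG Ω) →ₐ[ℂ] Cyl (PG Ω') :=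
  AlgHom.ofLinearMap
    { toFun := fun x => Cyl.mk (Pmap f (Cyl.fst x)) (Pmap f (Cyl.snd x))
      map_add' := fun x y => by apply Cyl.ext <;> simp
      map_smul' := fun x y => by apply Cyl.ext <;> simp }
    (by apply Cyl.ext <;> simp)
    (fun x y => by apply Cyl.ext <;> simp [sigL_Pmap f hf])

theorem fst_cylMap (f : Ω.A →ₐ[ℂ] Ω'.A)
    (hf : ∀ q a, a ∈ Ω.grading q → f a ∈ Ω'.grading q) (x : Cyl (PG Ω)) :
    Cyl.fst (cylMap f hf x) = Pmap f (Cyl.fst x) := rfl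

theorem snd_cylMap (f : Ω.A →ₐ[ℂ] Ω'.A)
    (hf : ∀ q a, a ∈ Ω.grading q → f a ∈ Ω'.grading q) (x : Cyl (PG Ω)) :
    Cyl.snd (cylMap f hf x) = Pmap f (Cyl.snd x) := rfl

end Poly

set_option linter.unusedSectionVars false

/-! ### Consequences of the universal property -/

/-- morphism of dgas -/
def IsDga {m n : ℕ} (Ω : SimplexForms m) (Ω' : SimplexForms n) (f : Ω.A →ₐ[ℂ] Ω'.A) : Prop :=
  (∀ a, f (Ω.d a) = Ω'.d (f a)) ∧
    (∀ (p : ℕ) (a : Ω.A), a ∈ Ω.grading p → f a ∈ Ω'.grading p)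

theorem IsDga.comp {l m n : ℕ} {Ω₁ : SimplexForms l} {Ω₂ : SimplexForms m} {Ω₃ : SimplexForms n}
    {g : Ω₂.A →ₐ[ℂ] Ω₃.A} {f : Ω₁.A →ₐ[ℂ] Ω₂.A} (hg : IsDga Ω₂ Ω₃ g) (hf : IsDga Ω₁ Ω₂ f) :
    IsDga Ω₁ Ω₃ (g.comp f) :=
  ⟨fun a => by simp [hf.1, hg.1], fun p a ha => hg.2 _ _ (hf.2 _ _ ha)⟩

/-- The forms `Ω'` with the coordinates indexed along another simplex. -/
def SimplexForms.recoord {n : ℕ} (Ω : SimplexForms n) {m : ℕ} (y : Fin (m + 1) → Ω.A)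
    (hy : ∀ i, y i ∈ Ω.grading 0) (hs : ∑ i, y i = 1) : SimplexForms m where
  A := Ω.A
  grading := Ω.grading
  gcomm := Ω.gcomm
  d := Ω.d
  d_mem := Ω.d_mem
  d_sq := Ω.d_sq
  leibniz := Ω.leibniz
  x := y
  x_mem := hy
  sum_x := hs
  sum_dx := by rw [← map_sum, hs, Ω.d_one]

theorem hom_ext_forms {m n : ℕ} {Ω : SimplexForms m} (hΩ : IsPolyDeRham Ω) {Ω' : SimplexForms n}
    {f g : Ω.A →ₐ[ℂ] Ω'.A} (hf : IsDga Ω Ω' f) (hg : IsDga Ω Ω' g)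
    (h : ∀ i, f (Ω.x i) = g (Ω.x i)) : f = g := by
  let B : SimplexForms m := Ω'.recoord (fun i => g (Ω.x i)) (fun i => hg.2 _ _ (Ω.x_mem i))
    (by rw [← map_sum, Ω.sum_x, map_one])
  exact (hΩ B).unique (y₁ := f) (y₂ := g) ⟨hf.1, hf.2, h⟩ ⟨hg.1, hg.2, fun i => rfl⟩

theorem pullback_unique {m n : ℕ} {Ω : SimplexForms m} (hΩ : IsPolyDeRham Ω) {Ω' : SimplexForms n}
    {a : Fin (n + 1) → Fin (m + 1)} {f g : Ω.A →ₐ[ℂ] Ω'.A} (hf : PullbackProp Ω Ω' a f)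
    (hg : PullbackProp Ω Ω' a g) : f = g :=
  hom_ext_forms hΩ ⟨hf.1, hf.2.1⟩ ⟨hg.1, hg.2.1⟩ (fun i => by rw [hf.2.2, hg.2.2])

theorem pullback_exists {m n : ℕ} {Ω : SimplexForms m} (hΩ : IsPolyDeRham Ω) (Ω' : SimplexForms n)
    (a : Fin (n + 1) → Fin (m + 1)) : ∃ f : Ω.A →ₐ[ℂ] Ω'.A, PullbackProp Ω Ω' a f := by
  let B : SimplexForms m := Ω'.recoord
    (fun j => ∑ i ∈ Finset.univ.filter (fun i => a i = j), Ω'.x i)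
    (fun j => Submodule.sum_mem _ (fun i _ => Ω'.x_mem i))
    (by rw [Finset.sum_fiberwise]; exact Ω'.sum_x)
  obtain ⟨f, hf, -⟩ := hΩ B
  exact ⟨f, hf⟩

theorem pullback_comp {l m n : ℕ} {Ω₁ : SimplexForms l} {Ω₂ : SimplexForms m}
    {Ω₃ : SimplexForms n} {a : Fin (m + 1) → Fin (l + 1)} {b : Fin (n + 1) → Fin (m + 1)}
    {f : Ω₁.A →ₐ[ℂ] Ω₂.A} {g : Ω₂.A →ₐ[ℂ] Ω₃.A} (hf : PullbackProp Ω₁ Ω₂ a f)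
    (hg : PullbackProp Ω₂ Ω₃ b g) : PullbackProp Ω₁ Ω₃ (a ∘ b) (g.comp f) := by
  refine ⟨fun y => by simp [hf.1, hg.1], fun p y hy => hg.2.1 _ _ (hf.2.1 _ _ hy), fun j => ?_⟩
  simp only [AlgHom.comp_apply, hf.2.2, map_sum, hg.2.2]
  simp only [Finset.sum_filter, Function.comp]
  simp only [← Finset.sum_filter]
  rw [Finset.sum_comm' (t' := Finset.univ.filter (fun i => a (b i) = j)) (s' := fun i => {b i})]
  · simp
  · intro x y
    simp only [Finset.mem_filter, Finset.mem_univ, true_and, Finset.mem_singleton]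
    constructor
    · rintro ⟨h1, h2⟩; subst h2; exact ⟨rfl, h1⟩
    · rintro ⟨h1, h2⟩; subst h1; exact ⟨h2, rfl⟩

theorem pullback_id {n : ℕ} (Ω : SimplexForms n) : PullbackProp Ω Ω id (AlgHom.id ℂ Ω.A) := by
  refine ⟨fun _ => rfl, fun _ _ h => h, fun j => ?_⟩
  simp [Finset.sum_filter]

/-! ### The contracting homotopy -/
section Homotopy
open Polynomial

variable {n : ℕ} {Ω : SimplexForms n} (hΩ : IsPolyDeRham Ω)

/-- The contraction map -/
noncomputable def contr (k : Fin (n + 1)) : Ω.A →ₐ[ℂ] (cylForms Ω k).A :=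
  (hΩ (cylForms Ω k)).choose

theorem contr_dga (k : Fin (n + 1)) : IsDga Ω (cylForms Ω k) (contr hΩ k) :=
  ⟨(hΩ (cylForms Ω k)).choose_spec.1.1, (hΩ (cylForms Ω k)).choose_spec.1.2.1⟩

theorem contr_x (k i : Fin (n + 1)) : contr hΩ k (Ω.x i) = (cylForms Ω k).x i :=
  (hΩ (cylForms Ω k)).choose_spec.1.2.2 i

theorem cylEv_dga (k : Fin (n + 1)) (s : ℂ) : IsDga (cylForms Ω k) Ω (cylEv Ω s) :=
  ⟨fun _ => Pev_Pd s _, fun p _ ha => Pev_mem s p _ (Cyl.mem_gr.1 ha).1⟩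

theorem cylEv_x (k i : Fin (n + 1)) (s : ℂ) :
    cylEv Ω s ((cylForms Ω k).x i) = s • Ω.x i + if i = k then (1 - s) • 1 else 0 := by
  change Pev Ω s (Px Ω k i) = _
  simp only [Px, map_add]
  split_ifs <;> simp

theorem ev_one_contr (k : Fin (n + 1)) : (cylEv Ω 1).comp (contr hΩ k) = AlgHom.id ℂ Ω.A := by
  refine hom_ext_forms hΩ ((cylEv_dga k 1).comp (contr_dga hΩ k)) ⟨fun _ => rfl, fun _ _ h => h⟩ ?_
  intro i
  have := cylEv_x (Ω := Ω) k i 1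
  exact (congrArg (cylEv Ω 1) (contr_x hΩ k i)).trans (this.trans (by simp))

theorem ev_zero_contr (k : Fin (n + 1)) :
    PullbackProp Ω Ω (fun _ => k) ((cylEv Ω 0).comp (contr hΩ k)) := by
  have h := (cylEv_dga k 0).comp (contr_dga hΩ k)
  refine ⟨h.1, h.2, fun j => ?_⟩
  have := cylEv_x (Ω := Ω) k j 0
  refine (congrArg (cylEv Ω 0) (contr_x hΩ k j)).trans (this.trans ?_)
  by_cases hj : j = k
  · subst hj
    simp [Ω.sum_x]
  · simp [hj, Ne.symm hj]

/-- The contracting homotopy onto the vertex `k`. -/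
noncomputable def hty (k : Fin (n + 1)) : Ω.A →ₗ[ℂ] Ω.A :=
  cylInt Ω ∘ₗ (contr hΩ k).toLinearMap

theorem hty_zero (k : Fin (n + 1)) (a : Ω.A) (ha : a ∈ Ω.grading 0) : hty hΩ k a = 0 := by
  have h := (Cyl.mem_gr.1 ((contr_dga hΩ k).2 _ _ ha)).2
  have h' : Cyl.snd (contr hΩ k a) = 0 := h
  exact (congrArg (fun z => Pint Ω (sigL (PG Ω) z)) h').trans (by simp)

theorem hty_succ (k : Fin (n + 1)) (q : ℕ) (a : Ω.A) (ha : a ∈ Ω.grading (q + 1)) :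
    hty hΩ k a ∈ Ω.grading q := by
  have h := (Cyl.mem_gr.1 ((contr_dga hΩ k).2 _ _ ha)).2
  exact Pint_mem q _ (sigL_mem _ h)

theorem hty_homotopy (k : Fin (n + 1)) (e : Ω.A →ₐ[ℂ] Ω.A)
    (he : PullbackProp Ω Ω (fun _ => k) e) (a : Ω.A) :
    Ω.d (hty hΩ k a) + hty hΩ k (Ω.d a) = a - e a := by
  have h := cylInt_stokes (Ω := Ω) (contr hΩ k a)
  have h1 := (contr_dga hΩ k).1 a
  have h2 := AlgHom.congr_fun (ev_one_contr hΩ k) a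
  have h3 := AlgHom.congr_fun (pullback_unique hΩ (ev_zero_contr hΩ k) he) a
  have h4 : hty hΩ k (Ω.d a) = cylInt Ω (Cyl.dC (PG Ω) (Pd Ω) (Pdel Ω) (contr hΩ k a)) :=
    congrArg (cylInt Ω) h1
  rw [h4]
  refine h.trans ?_
  exact congrArg₂ (· - ·) h2 h3

variable {m : ℕ} {Ω' : SimplexForms m} (hΩ' : IsPolyDeRham Ω')

theorem hty_natural {f : Ω.A →ₐ[ℂ] Ω'.A} {a : Fin (m + 1) → Fin (n + 1)}
    (hf : PullbackProp Ω Ω' a f) (k : Fin (n + 1)) (l : Fin (m + 1)) (hl : a l = k) (y : Ω.A) :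
    f (hty hΩ k y) = hty hΩ' l (f y) := by
  have hc : IsDga (cylForms Ω k) (cylForms Ω' l) (cylMap f hf.2.1) := by
    constructor
    · intro x
      refine Cyl.ext (G := PG Ω') ?_ ?_
      · exact Pmap_Pd f hf.1 _
      · change Pmap f (sigL (PG Ω) (Pdel Ω (Cyl.fst x)) + Pd Ω (Cyl.snd x)) =
          sigL (PG Ω') (Pdel Ω' (Pmap f (Cyl.fst x))) + Pd Ω' (Pmap f (Cyl.snd x))
        rw [map_add, Pmap_Pd f hf.1, ← sigL_Pmap f hf.2.1, Pmap_Pdel]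
    · intro p x hx
      obtain ⟨h1, h2⟩ := Cyl.mem_gr.1 hx
      refine Cyl.mem_gr.2 ⟨Pmap_mem f hf.2.1 p _ h1, ?_⟩
      cases p with
      | zero =>
        have h2' : Cyl.snd x = 0 := h2
        change Pmap f (Cyl.snd x) = 0
        rw [h2', map_zero]
      | succ p => exact Pmap_mem f hf.2.1 p _ h2
  have key : (show (cylForms Ω k).A →ₐ[ℂ] (cylForms Ω' l).A from cylMap f hf.2.1).comp
      (contr hΩ k) = (contr hΩ' l).comp f := by
    refine hom_ext_forms hΩ (Ω' := cylForms Ω' l) (hc.comp (contr_dga hΩ k))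
      ((contr_dga hΩ' l).comp ⟨hf.1, hf.2.1⟩) ?_
    intro i
    rw [AlgHom.comp_apply, AlgHom.comp_apply, contr_x, hf.2.2, map_sum]
    simp only [contr_x]
    refine Cyl.ext (G := PG Ω') ?_ ?_
    · have e : Cyl.fst (∑ x with a x = i, (Cyl.mk (Px Ω' l x) 0 : Cyl (PG Ω'))) =
          ∑ x with a x = i, Px Ω' l x := by
        simp only [map_sum, Cyl.fst_mk]
      refine Eq.trans ?_ e.symm
      change Pmap f (Px Ω k i) = _
      simp only [Px, map_add, Finset.sum_add_distrib, Pmap_tmul, hf.2.2, TensorProduct.tmul_sum]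
      congr 1
      rw [Finset.sum_ite_eq']
      simp only [Finset.mem_filter, Finset.mem_univ, true_and, hl]
      by_cases h : i = k
      · simp [h]
      · simp [h, Ne.symm h]
    · have e : Cyl.snd (∑ x with a x = i, (Cyl.mk (Px Ω' l x) 0 : Cyl (PG Ω'))) = 0 := by
        simp only [map_sum, Cyl.snd_mk, Finset.sum_const_zero]
      refine Eq.trans ?_ e.symm
      change Pmap f 0 = 0
      simp
  have hk := AlgHom.congr_fun key y
  have h4 : hty hΩ' l (f y) = cylInt Ω' (cylMap f hf.2.1 (contr hΩ k y)) :=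
    (congrArg (cylInt Ω') hk).symm
  rw [h4]
  change f (Pint Ω (sigL (PG Ω) (Cyl.snd _))) = Pint Ω' (sigL (PG Ω') (Pmap f (Cyl.snd _)))
  rw [Pmap_Pint, sigL_Pmap f hf.2.1]
  rfl

end Homotopy

set_option linter.unusedSectionVars false
set_option linter.unusedSimpArgs false

/-! ### Signs -/
theorem sgn_eq (n : ℤ) : sgn n = if Even n then 1 else -1 := by
  unfold sgn
  split_ifs with h
  · rw [Even.neg_one_zpow h]; rfl
  · rw [Odd.neg_one_zpow (Int.not_even_iff_odd.1 h)]; rfl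

theorem npow_sgn (n : ℕ) : (-1 : ℤ) ^ n = sgn n := by
  rw [sgn_eq, neg_one_pow_eq_ite]
  simp

/-! ### The dg Lie algebra `L ⊗ A ⊗ Ω` -/
section DGLA
variable {n : ℕ} (Ω : SimplexForms n) (L : GradedDGLA) (A : Type) [CommRing A] [Algebra ℂ A]

/-- the total space -/
abbrev VV : Type := (L.L ⊗[ℂ] A) ⊗[ℂ] Ω.A

variable {Ω L A}
/-- pure tensors -/
def pt (x : L.L) (a : A) (α : Ω.A) : VV Ω L A := (x ⊗ₜ a) ⊗ₜ α

theorem pt_add_left (x y : L.L) (a : A) (α : Ω.A) :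
    (pt (x + y) a α : VV Ω L A) = pt x a α + pt y a α := by
  simp [pt, TensorProduct.add_tmul]
theorem pt_add_right (x : L.L) (a : A) (α β : Ω.A) :
    (pt x a (α + β) : VV Ω L A) = pt x a α + pt x a β := by
  simp [pt, TensorProduct.tmul_add]
theorem pt_neg_left (x : L.L) (a : A) (α : Ω.A) :
    (pt (-x) a α : VV Ω L A) = - pt x a α := by
  simp [pt, TensorProduct.neg_tmul]
theorem pt_neg_right (x : L.L) (a : A) (α : Ω.A) :
    (pt x a (-α) : VV Ω L A) = - pt x a α := by
  simp [pt, TensorProduct.tmul_neg]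
theorem pt_zero_left (a : A) (α : Ω.A) : (pt 0 a α : VV Ω L A) = 0 := by
  simp [pt]
theorem pt_zero_mid (x : L.L) (α : Ω.A) : (pt x 0 α : VV Ω L A) = 0 := by
  simp [pt]
theorem pt_zero_right (x : L.L) (a : A) : (pt x a 0 : VV Ω L A) = 0 := by
  simp [pt]
theorem pt_zsmul_left (r : ℤ) (x : L.L) (a : A) (α : Ω.A) :
    (pt (r • x) a α : VV Ω L A) = r • pt x a α := by
  exact map_zsmul (AddMonoidHom.mk' (fun x => (pt x a α : VV Ω L A))
    (fun x y => pt_add_left x y a α)) r x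
theorem pt_zsmul_right (r : ℤ) (x : L.L) (a : A) (α : Ω.A) :
    (pt x a (r • α) : VV Ω L A) = r • pt x a α := by
  exact map_zsmul (AddMonoidHom.mk' (fun α => (pt x a α : VV Ω L A))
    (fun α β => pt_add_right x a α β)) r α
theorem pt_smul (r : ℂ) (x : L.L) (a : A) (α : Ω.A) :
    r • (pt x a α : VV Ω L A) = pt (r • x) a α := by
  simp [pt, TensorProduct.smul_tmul']

theorem vs_add (r : ℤ) (u v : VV Ω L A) : r • (u + v) = r • u + r • v := zsmul_add u v r
theorem vs_zero (r : ℤ) : r • (0 : VV Ω L A) = 0 := zsmul_zero r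
theorem vs_neg (r : ℤ) (v : VV Ω L A) : r • (-v) = -(r • v) := zsmul_neg v r
theorem vs_mul (r s : ℤ) (v : VV Ω L A) : r • s • v = (r * s) • v := (mul_zsmul v r s).symm
theorem vs_one (v : VV Ω L A) : (1 : ℤ) • v = v := one_zsmul v
theorem vs_neg_one (v : VV Ω L A) : (-1 : ℤ) • v = -v := by rw [neg_zsmul, one_zsmul]
theorem vs_left (Br : VV Ω L A →ₗ[ℂ] VV Ω L A →ₗ[ℂ] VV Ω L A) (r : ℤ) (u v : VV Ω L A) :
    Br (r • u) v = r • Br u v := map_zsmul (Br.flip v) r u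

variable (Ω L) in
/-- elements of total degree `d` with coefficients in `N` -/
noncomputable def WW (d : ℤ) (N : Submodule ℂ A) : Submodule ℂ (VV Ω L A) :=
  Submodule.span ℂ {v | ∃ (q : ℕ) (x : L.L) (a : A) (α : Ω.A), x ∈ L.gr (d - q) ∧ a ∈ N ∧
    α ∈ Ω.grading q ∧ v = pt x a α}

theorem pt_mem_WW {d : ℤ} {N : Submodule ℂ A} {p : ℤ} {q : ℕ} {x : L.L} {a : A} {α : Ω.A}
    (hx : x ∈ L.gr p) (ha : a ∈ N) (hα : α ∈ Ω.grading q) (hd : p + q = d) :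
    pt x a α ∈ WW Ω L d N := by
  refine Submodule.subset_span ⟨q, x, a, α, ?_, ha, hα, rfl⟩
  rw [← hd]
  simpa using hx

theorem WW_induction {d : ℤ} {N : Submodule ℂ A} {motive : VV Ω L A → Prop} (h0 : motive 0)
    (hadd : ∀ u v, motive u → motive v → motive (u + v))
    (ht : ∀ (p : ℤ) (q : ℕ) (x : L.L) (a : A) (α : Ω.A), p + q = d → x ∈ L.gr p → a ∈ N →
      α ∈ Ω.grading q → motive (pt x a α)) (v : VV Ω L A) (hv : v ∈ WW Ω L d N) : motive v := by
  suffices h : ∀ r : ℂ, motive (r • v) by simpa using h 1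
  induction hv using Submodule.span_induction with
  | mem v h =>
    intro r
    obtain ⟨q, x, a, α, hx, ha, hα, rfl⟩ := h
    rw [pt_smul]
    exact ht (d - q) q _ _ _ (by ring) (Submodule.smul_mem _ _ hx) ha hα
  | zero => intro r; simpa using h0
  | add u v _ _ hu hv => intro r; rw [smul_add]; exact hadd _ _ (hu r) (hv r)
  | smul s v _ hv => intro r; rw [smul_smul]; exact hv _

theorem WW_mono {d : ℤ} {N N' : Submodule ℂ A} (h : N ≤ N') : WW Ω L d N ≤ WW Ω L d N' := by
  refine Submodule.span_mono ?_
  rintro v ⟨q, x, a, α, hx, ha, hα, rfl⟩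
  exact ⟨q, x, a, α, hx, h ha, hα, rfl⟩

theorem WW_bot {d : ℤ} {v : VV Ω L A} (hv : v ∈ WW Ω L d (⊥ : Submodule ℂ A)) : v = 0 := by
  refine WW_induction (motive := fun v => v = 0) rfl (fun u v hu hv => by simp [hu, hv]) ?_ v hv
  intro p q x a α _ _ ha _
  have : a = 0 := ha
  rw [this, pt_zero_mid]

theorem lTensor_pt {m : ℕ} {Ω' : SimplexForms m} (f : Ω.A →ₗ[ℂ] Ω'.A) (x : L.L) (a : A)
    (α : Ω.A) : LinearMap.lTensor (L.L ⊗[ℂ] A) f (pt x a α : VV Ω L A) = pt x a (f α) := rfl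

theorem lTensor_mem_WW {m : ℕ} {Ω' : SimplexForms m} {f : Ω.A →ₗ[ℂ] Ω'.A}
    (hf : ∀ q a, a ∈ Ω.grading q → f a ∈ Ω'.grading q) {d : ℤ} {N : Submodule ℂ A} {v : VV Ω L A}
    (hv : v ∈ WW Ω L d N) : LinearMap.lTensor (L.L ⊗[ℂ] A) f v ∈ WW Ω' L d N := by
  refine WW_induction (motive := fun v => LinearMap.lTensor (L.L ⊗[ℂ] A) f v ∈ WW Ω' L d N)
    (by simp) (fun u v hu hv => by rw [map_add]; exact Submodule.add_mem _ hu hv) ?_ v hv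
  intro p q x a α h hx ha hα
  exact pt_mem_WW hx ha (hf _ _ hα) h

/-- The differential of `L ⊗ A ⊗ Ω`. -/
def IsDiff (D : VV Ω L A →ₗ[ℂ] VV Ω L A) : Prop :=
  ∀ (p : ℤ) (q : ℕ) (x : L.L) (a : A) (α : Ω.A), x ∈ L.gr p → α ∈ Ω.grading q →
    D (pt x a α) = pt (L.dL x) a α + sgn p • pt x a (Ω.d α)

/-- The bracket of `L ⊗ A ⊗ Ω`. -/
def IsBr (Br : VV Ω L A →ₗ[ℂ] VV Ω L A →ₗ[ℂ] VV Ω L A) : Prop :=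
  ∀ (p p' : ℤ) (q q' : ℕ) (x y : L.L) (a b : A) (α β : Ω.A), x ∈ L.gr p → y ∈ L.gr p' →
    α ∈ Ω.grading q → β ∈ Ω.grading q' →
    Br (pt x a α) (pt y b β) = sgn ((q : ℤ) * p') • pt (L.br x y) (a * b) (α * β)

variable {D : VV Ω L A →ₗ[ℂ] VV Ω L A} (hD : IsDiff D)
  {Br : VV Ω L A →ₗ[ℂ] VV Ω L A →ₗ[ℂ] VV Ω L A} (hBr : IsBr Br)

include hD in
theorem D_mem {d e : ℤ} (he : d + 1 = e) {N : Submodule ℂ A} {v : VV Ω L A}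
    (hv : v ∈ WW Ω L d N) : D v ∈ WW Ω L e N := by
  refine WW_induction (motive := fun v => D v ∈ WW Ω L e N)
    (by simp) (fun u v hu hv => by rw [map_add]; exact Submodule.add_mem _ hu hv) ?_ v hv
  intro p q x a α h hx ha hα
  rw [hD p q x a α hx hα]
  refine Submodule.add_mem _ (pt_mem_WW (L.d_mem _ _ hx) ha hα (by omega)) (zsmul_mem ?_ _)
  exact pt_mem_WW hx ha (Ω.d_mem _ _ hα) (by push_cast; omega)

include hBr in
theorem Br_mem {d e g : ℤ} (hg : d + e = g) {N N' N'' : Submodule ℂ A}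
    (hN : ∀ a ∈ N, ∀ b ∈ N', a * b ∈ N'') {u v : VV Ω L A}
    (hu : u ∈ WW Ω L d N) (hv : v ∈ WW Ω L e N') : Br u v ∈ WW Ω L g N'' := by
  refine WW_induction (motive := fun u => Br u v ∈ WW Ω L g N'')
    (by simp) (fun u v hu hv => by
      rw [map_add, LinearMap.add_apply]; exact Submodule.add_mem _ hu hv) ?_ u hu
  intro p q x a α h hx ha hα
  refine WW_induction (motive := fun v => Br (pt x a α) v ∈ WW Ω L g N'')
    (by simp) (fun u v hu hv => by
      rw [map_add]; exact Submodule.add_mem _ hu hv) ?_ v hv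
  intro p' q' y b β h' hy hb hβ
  rw [hBr p p' q q' x y a b α β hx hy hα hβ]
  refine zsmul_mem ?_ _
  exact pt_mem_WW (L.br_mem _ _ _ _ hx hy) (hN a ha b hb)
    (SetLike.GradedMul.mul_mem (A := Ω.grading) hα hβ) (by push_cast; omega)

include hD in
theorem D_sq {d : ℤ} {N : Submodule ℂ A} {v : VV Ω L A} (hv : v ∈ WW Ω L d N) :
    D (D v) = 0 := by
  refine WW_induction (motive := fun v => D (D v) = 0)
    (by simp only [map_zero, LinearMap.zero_apply, vs_zero, add_zero, neg_zero]) (fun u v hu hv => by simp only [map_add, hu, hv, add_zero]) ?_ v hv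
  intro p q x a α h hx ha hα
  rw [hD p q x a α hx hα, map_add, map_zsmul, hD _ q _ a α (L.d_mem _ _ hx) hα,
    hD p _ x a _ hx (Ω.d_mem _ _ hα), L.d_sq, Ω.d_sq, pt_zero_left, pt_zero_right]
  simp only [vs_zero, add_zero, zero_add]
  by_cases hp : Even p <;>
    simp only [sgn_eq, Int.even_add_one, hp, not_true, not_false_iff, if_true, if_false,
      vs_one, vs_neg_one] <;> abel

include hD hBr in
theorem D_Br {d e : ℤ} {N N' : Submodule ℂ A} {u v : VV Ω L A}
    (hu : u ∈ WW Ω L d N) (hv : v ∈ WW Ω L e N') :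
    D (Br u v) = Br (D u) v + sgn d • Br u (D v) := by
  refine WW_induction (motive := fun u => D (Br u v) = Br (D u) v + sgn d • Br u (D v))
    (by simp only [map_zero, LinearMap.zero_apply, vs_zero, add_zero, neg_zero]) (fun u v hu hv => by
      simp only [map_add, LinearMap.add_apply, hu, hv, vs_add]; abel) ?_ u hu
  intro p q x a α h hx ha hα
  refine WW_induction (motive := fun v => D (Br (pt x a α) v) =
      Br (D (pt x a α)) v + sgn d • Br (pt x a α) (D v))
    (by simp only [map_zero, LinearMap.zero_apply, vs_zero, add_zero, neg_zero]) (fun u v hu hv => by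
      simp only [map_add, hu, hv, vs_add]; abel) ?_ v hv
  intro p' q' y b β h' hy hb hβ
  have hxy := L.br_mem _ _ _ _ hx hy
  have hαβ := SetLike.GradedMul.mul_mem (A := Ω.grading) hα hβ
  rw [hBr p p' q q' x y a b α β hx hy hα hβ, map_zsmul, hD _ _ _ _ _ hxy hαβ,
    hD _ _ _ _ _ hx hα, hD _ _ _ _ _ hy hβ, L.leib p x y hx, Ω.leibniz q α β hα]
  simp only [map_add, LinearMap.add_apply, vs_left]
  simp only [map_zsmul]
  rw [hBr _ _ _ _ _ _ _ _ _ _ (L.d_mem _ _ hx) hy hα hβ,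
    hBr _ _ _ _ _ _ _ _ _ _ hx hy (Ω.d_mem _ _ hα) hβ,
    hBr _ _ _ _ _ _ _ _ _ _ hx (L.d_mem _ _ hy) hα hβ,
    hBr _ _ _ _ _ _ _ _ _ _ hx hy hα (Ω.d_mem _ _ hβ)]
  simp only [pt_add_left, pt_add_right, pt_zsmul_left, pt_zsmul_right, npow_sgn, ← h, vs_add,
    vs_mul, sgn_eq]
  push_cast
  by_cases hp : Even p <;> by_cases hq : Even q <;> by_cases hp' : Even p' <;>
    simp [vs_one, vs_neg_one, ← Int.not_even_iff_odd, Int.even_add, Int.even_mul, hp, hq, hp', Nat.even_add, Int.even_coe_nat] <;> abel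

include hBr in
theorem Br_skew {d e : ℤ} {N N' : Submodule ℂ A} {u v : VV Ω L A}
    (hu : u ∈ WW Ω L d N) (hv : v ∈ WW Ω L e N') :
    Br u v = - (sgn (d * e) • Br v u) := by
  refine WW_induction (motive := fun u => Br u v = - (sgn (d * e) • Br v u))
    (by simp only [map_zero, LinearMap.zero_apply, vs_zero, add_zero, neg_zero]) (fun u v hu hv => by
      simp only [map_add, LinearMap.add_apply, hu, hv, vs_add]; abel) ?_ u hu
  intro p q x a α h hx ha hα
  refine WW_induction (motive := fun v => Br (pt x a α) v = - (sgn (d * e) • Br v (pt x a α)))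
    (by simp only [map_zero, LinearMap.zero_apply, vs_zero, add_zero, neg_zero]) (fun u v hu hv => by
      simp only [map_add, LinearMap.add_apply, hu, hv, vs_add]; abel) ?_ v hv
  intro p' q' y b β h' hy hb hβ
  rw [hBr p p' q q' x y a b α β hx hy hα hβ, hBr _ _ _ _ _ _ _ _ _ _ hy hx hβ hα,
    L.skew p p' x y hx hy, Ω.gcomm q q' α β hα hβ, mul_comm a b]
  simp only [pt_neg_left, pt_zsmul_left, pt_zsmul_right, npow_sgn, ← h, ← h', vs_neg,
    vs_mul, sgn_eq]
  push_cast
  by_cases hp : Even p <;> by_cases hq : Even q <;> by_cases hp' : Even p' <;>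
    by_cases hq' : Even q' <;>
    simp [vs_one, vs_neg_one, ← Int.not_even_iff_odd, Int.even_add, Int.even_mul, hp, hq, hp', hq', Int.even_coe_nat]

include hBr in
theorem Br_jacobi {d e g : ℤ} {N N' N'' : Submodule ℂ A} {u v w : VV Ω L A}
    (hu : u ∈ WW Ω L d N) (hv : v ∈ WW Ω L e N') (hw : w ∈ WW Ω L g N'') :
    Br u (Br v w) = Br (Br u v) w + sgn (d * e) • Br v (Br u w) := by
  refine WW_induction (motive := fun u =>
      Br u (Br v w) = Br (Br u v) w + sgn (d * e) • Br v (Br u w))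
    (by simp only [map_zero, LinearMap.zero_apply, vs_zero, add_zero, neg_zero]) (fun u v hu hv => by
      simp only [map_add, LinearMap.add_apply, hu, hv, vs_add]; abel) ?_ u hu
  intro p q x a α h hx ha hα
  refine WW_induction (motive := fun v =>
      Br (pt x a α) (Br v w) = Br (Br (pt x a α) v) w + sgn (d * e) • Br v (Br (pt x a α) w))
    (by simp only [map_zero, LinearMap.zero_apply, vs_zero, add_zero, neg_zero]) (fun u v hu hv => by
      simp only [map_add, LinearMap.add_apply, hu, hv, vs_add]; abel) ?_ v hv
  intro p' q' y b β h' hy hb hβ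
  refine WW_induction (motive := fun w =>
      Br (pt x a α) (Br (pt y b β) w) = Br (Br (pt x a α) (pt y b β)) w +
        sgn (d * e) • Br (pt y b β) (Br (pt x a α) w))
    (by simp only [map_zero, LinearMap.zero_apply, vs_zero, add_zero, neg_zero]) (fun u v hu hv => by
      simp only [map_add, hu, hv, vs_add]; abel) ?_ w hw
  intro p'' q'' z c γ h'' hz hc hγ
  have hxy := L.br_mem _ _ _ _ hx hy
  have hxz := L.br_mem _ _ _ _ hx hz
  have hyz := L.br_mem _ _ _ _ hy hz
  have hαβ := SetLike.GradedMul.mul_mem (A := Ω.grading) hα hβ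
  have hαγ := SetLike.GradedMul.mul_mem (A := Ω.grading) hα hγ
  have hβγ := SetLike.GradedMul.mul_mem (A := Ω.grading) hβ hγ
  rw [hBr _ _ _ _ _ _ _ _ _ _ hx hy hα hβ, hBr _ _ _ _ _ _ _ _ _ _ hx hz hα hγ,
    hBr _ _ _ _ _ _ _ _ _ _ hy hz hβ hγ]
  simp only [vs_left]
  simp only [map_zsmul]
  rw [hBr _ _ _ _ _ _ _ _ _ _ hx hyz hα hβγ, hBr _ _ _ _ _ _ _ _ _ _ hxy hz hαβ hγ,
    hBr _ _ _ _ _ _ _ _ _ _ hy hxz hβ hαγ, L.jacobi p p' x y z hx hy, ← mul_assoc β α γ,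
    Ω.gcomm q' q β α hβ hα, smul_mul_assoc, mul_assoc α β γ, mul_left_comm b a c, mul_assoc a b c]
  simp only [pt_add_left, pt_zsmul_left, pt_zsmul_right, npow_sgn, ← h, ← h', vs_add,
    vs_mul, sgn_eq]
  push_cast
  by_cases hp : Even p <;> by_cases hq : Even q <;> by_cases hp' : Even p' <;>
    by_cases hq' : Even q' <;> by_cases hp'' : Even p'' <;>
    simp [vs_one, vs_neg_one, ← Int.not_even_iff_odd, Int.even_add, Int.even_mul, hp, hq, hp', hq', hp'', Int.even_coe_nat]

end DGLA

set_option linter.unusedSectionVars false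
set_option linter.unusedSimpArgs false

theorem Deg1m_eq (F : ∀ k, SimplexForms k) (L : GradedDGLA)
    (A : Type) [CommRing A] [Algebra ℂ A] (m : Submodule ℂ A) (k : ℕ) :
    Deg1m F L A m k = WW (F k) L 1 m := by
  apply le_antisymm
  · refine iSup_le fun q => ?_
    rintro v ⟨t, rfl⟩
    induction t using TensorProduct.induction_on with
    | zero => simp
    | add u v hu hv => rw [map_add]; exact Submodule.add_mem _ hu hv
    | tmul s α =>
      induction s using TensorProduct.induction_on with
      | zero => simp
      | add u v hu hv => rw [TensorProduct.add_tmul, map_add]; exact Submodule.add_mem _ hu hv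
      | tmul x a => exact pt_mem_WW (p := 1 - q) x.2 a.2 α.2 (by ring)
  · refine Submodule.span_le.2 ?_
    rintro v ⟨q, x, a, α, hx, ha, hα, rfl⟩
    refine Submodule.mem_iSup_of_mem q ⟨((⟨x, hx⟩ : L.gr (1 - (q : ℤ))) ⊗ₜ[ℂ] (⟨a, ha⟩ : m)) ⊗ₜ[ℂ]
      (⟨α, hα⟩ : (F k).grading q), rfl⟩

section Core
variable {L : GradedDGLA} {A : Type} [CommRing A] [Algebra ℂ A]

section nat
variable {n m : ℕ} {Ω : SimplexForms n} {Ω' : SimplexForms m}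
  {f : Ω.A →ₐ[ℂ] Ω'.A} (hf : IsDga Ω Ω' f)
  {D : VV Ω L A →ₗ[ℂ] VV Ω L A} (hD : IsDiff D)
  {Br : VV Ω L A →ₗ[ℂ] VV Ω L A →ₗ[ℂ] VV Ω L A} (hBr : IsBr Br)
  {D' : VV Ω' L A →ₗ[ℂ] VV Ω' L A} (hD' : IsDiff D')
  {Br' : VV Ω' L A →ₗ[ℂ] VV Ω' L A →ₗ[ℂ] VV Ω' L A} (hBr' : IsBr Br')

variable (L A) in
/-- Base change of a linear map of forms. -/
noncomputable abbrev lT (g : Ω.A →ₗ[ℂ] Ω'.A) : VV Ω L A →ₗ[ℂ] VV Ω' L A :=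
  LinearMap.lTensor (L.L ⊗[ℂ] A) g

include hf hD hD' in
theorem D_natural {d : ℤ} {N : Submodule ℂ A} {v : VV Ω L A} (hv : v ∈ WW Ω L d N) :
    lT L A f.toLinearMap (D v) = D' (lT L A f.toLinearMap v) := by
  refine WW_induction (motive := fun v => lT L A f.toLinearMap (D v) =
    D' (lT L A f.toLinearMap v))
    (by simp only [map_zero]) (fun u v hu hv => by simp only [map_add, hu, hv]) ?_ v hv
  intro p q x a α h hx ha hα
  rw [hD p q x a α hx hα, map_add, map_zsmul, lTensor_pt, lTensor_pt, lTensor_pt,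
    AlgHom.toLinearMap_apply, AlgHom.toLinearMap_apply, hD' p q x a _ hx (hf.2 _ _ hα)]
  simp only [hf.1]

include hf hBr hBr' in
theorem Br_natural {d e : ℤ} {N N' : Submodule ℂ A} {u v : VV Ω L A} (hu : u ∈ WW Ω L d N)
    (hv : v ∈ WW Ω L e N') :
    lT L A f.toLinearMap (Br u v) = Br' (lT L A f.toLinearMap u) (lT L A f.toLinearMap v) := by
  refine WW_induction (motive := fun u => lT L A f.toLinearMap (Br u v) =
      Br' (lT L A f.toLinearMap u) (lT L A f.toLinearMap v))
    (by simp only [map_zero, LinearMap.zero_apply])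
    (fun u v hu hv => by simp only [map_add, LinearMap.add_apply, hu, hv]) ?_ u hu
  intro p q x a α h hx ha hα
  refine WW_induction (motive := fun v => lT L A f.toLinearMap (Br (pt x a α) v) =
      Br' (lT L A f.toLinearMap (pt x a α)) (lT L A f.toLinearMap v))
    (by simp only [map_zero]) (fun u v hu hv => by simp only [map_add, hu, hv]) ?_ v hv
  intro p' q' y b β h' hy hb hβ
  rw [hBr p p' q q' x y a b α β hx hy hα hβ, map_zsmul, lTensor_pt, lTensor_pt, lTensor_pt,
    AlgHom.toLinearMap_apply, AlgHom.toLinearMap_apply, AlgHom.toLinearMap_apply,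
    hBr' p p' q q' x y a b _ _ hx hy (hf.2 _ _ hα) (hf.2 _ _ hβ)]
  simp only [map_mul]
end nat

section GG
variable {n : ℕ} {Ω : SimplexForms n} (hΩ : IsPolyDeRham Ω)
  {D : VV Ω L A →ₗ[ℂ] VV Ω L A} (hD : IsDiff D)

/-- signed homotopy on forms -/
noncomputable def htyS (k : Fin (n + 1)) : Ω.A →ₗ[ℂ] Ω.A := hty hΩ k ∘ₗ sigL Ω.grading

theorem htyS_apply (k : Fin (n + 1)) {q : ℕ} {α : Ω.A} (hα : α ∈ Ω.grading q) :
    htyS hΩ k α = sgn q • hty hΩ k α := by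
  rw [htyS, LinearMap.comp_apply, sigL_of_mem _ hα, map_zsmul, npow_sgn]

theorem GG_mem (k : Fin (n + 1)) {d e : ℤ} (he : e + 1 = d) {N : Submodule ℂ A} {v : VV Ω L A}
    (hv : v ∈ WW Ω L d N) : lT L A (htyS hΩ k) v ∈ WW Ω L e N := by
  refine WW_induction (motive := fun v => lT L A (htyS hΩ k) v ∈ WW Ω L e N)
    (by simp) (fun u v hu hv => by rw [map_add]; exact Submodule.add_mem _ hu hv) ?_ v hv
  intro p q x a α h hx ha hα
  rw [lTensor_pt, htyS_apply hΩ k hα, pt_zsmul_right]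
  refine zsmul_mem ?_ _
  cases q with
  | zero => rw [hty_zero hΩ k α hα, pt_zero_right]; exact Submodule.zero_mem _
  | succ q =>
    refine pt_mem_WW hx ha (hty_succ hΩ k q α hα) ?_
    push_cast at h; omega

include hD in
theorem GG_homotopy (k : Fin (n + 1)) {e : Ω.A →ₐ[ℂ] Ω.A}
    (he : PullbackProp Ω Ω (fun _ => k) e) {N : Submodule ℂ A} {v : VV Ω L A}
    (hv : v ∈ WW Ω L 2 N) : D (lT L A (htyS hΩ k) v) =
      lT L A (htyS hΩ k) (D v) + (v - lT L A e.toLinearMap v) := by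
  refine WW_induction (motive := fun v => D (lT L A (htyS hΩ k) v) =
      lT L A (htyS hΩ k) (D v) + (v - lT L A e.toLinearMap v))
    (by simp only [map_zero, sub_zero, add_zero])
    (fun u v hu hv => by simp only [map_add, hu, hv]; abel) ?_ v hv
  intro p q x a α h hx ha hα
  obtain ⟨q', hq'⟩ : ∃ q', hty hΩ k α ∈ Ω.grading q' := by
    cases q with
    | zero => exact ⟨0, by rw [hty_zero hΩ k α hα]; exact Submodule.zero_mem _⟩
    | succ q => exact ⟨q, hty_succ hΩ k q α hα⟩
  have hh : Ω.d (hty hΩ k α) = α - e α - hty hΩ k (Ω.d α) :=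
    eq_sub_of_add_eq (hty_homotopy hΩ k e he α)
  rw [lTensor_pt, htyS_apply hΩ k hα, pt_zsmul_right, map_zsmul, hD p q' x a _ hx hq',
    hD p q x a _ hx hα, map_add, map_zsmul, lTensor_pt, lTensor_pt, lTensor_pt,
    htyS_apply hΩ k hα, htyS_apply hΩ k (Ω.d_mem _ _ hα), hh, AlgHom.toLinearMap_apply]
  simp only [sub_eq_add_neg, pt_add_right, pt_neg_right, pt_zsmul_right, vs_add, vs_neg, vs_mul]
  have hpq : Even p ↔ Even (q : ℤ) := by
    have : Even (p + q) := by rw [h]; decide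
    simpa [Int.even_add] using this
  push_cast
  by_cases hp : Even p
  · have hq := hpq.1 hp
    simp only [sgn_eq, Int.even_add_one, hp, hq, not_true, not_false_iff, if_true, if_false,
      vs_one, vs_neg_one, one_mul, mul_one, mul_neg, neg_mul, neg_neg]
    abel
  · have hq : ¬ Even (q : ℤ) := fun h => hp (hpq.2 h)
    simp only [sgn_eq, Int.even_add_one, hp, hq, not_true, not_false_iff, if_true, if_false,
      vs_one, vs_neg_one, one_mul, mul_one, mul_neg, neg_mul, neg_neg]
    abel
end GG

section curv
variable {n : ℕ} {Ω : SimplexForms n}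
  {D : VV Ω L A →ₗ[ℂ] VV Ω L A} (hD : IsDiff D)
  {Br : VV Ω L A →ₗ[ℂ] VV Ω L A →ₗ[ℂ] VV Ω L A} (hBr : IsBr Br)

/-- curvature -/
noncomputable def curv (D : VV Ω L A →ₗ[ℂ] VV Ω L A)
    (Br : VV Ω L A →ₗ[ℂ] VV Ω L A →ₗ[ℂ] VV Ω L A) (φ : VV Ω L A) : VV Ω L A :=
  D φ + (1 / 2 : ℂ) • Br φ φ

theorem sgn_one : sgn 1 = -1 := by rw [sgn_eq]; decide
theorem sgn_two : sgn 2 = 1 := by rw [sgn_eq]; decide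

include hBr in
theorem triple {N : Submodule ℂ A} {φ : VV Ω L A} (hφ : φ ∈ WW Ω L 1 N) :
    Br φ (Br φ φ) = 0 ∧ Br (Br φ φ) φ = 0 := by
  have hφ' := WW_mono (le_top : N ≤ ⊤) hφ
  have h2 : Br φ φ ∈ WW Ω L 2 (⊤ : Submodule ℂ A) :=
    Br_mem hBr (by norm_num) (fun _ _ _ _ => Submodule.mem_top) hφ' hφ'
  have hs := Br_skew hBr h2 hφ'
  have hj := Br_jacobi hBr hφ' hφ' hφ'
  rw [show (2 : ℤ) * 1 = 2 by norm_num, sgn_two, vs_one] at hs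
  rw [show (1 : ℤ) * 1 = 1 by norm_num, sgn_one, vs_neg_one, hs] at hj
  have h3 : (3 : ℂ) • Br φ (Br φ φ) = 0 := by
    have : (3 : ℂ) • Br φ (Br φ φ) =
        Br φ (Br φ φ) + Br φ (Br φ φ) + Br φ (Br φ φ) := by module
    rw [this]
    nth_rewrite 1 [hj]
    abel
  have h0 : Br φ (Br φ φ) = 0 := (smul_eq_zero.1 h3).resolve_left (by norm_num)
  exact ⟨h0, by rw [hs, h0, neg_zero]⟩

include hD hBr in
theorem bianchi {N : Submodule ℂ A} {φ : VV Ω L A} (hφ : φ ∈ WW Ω L 1 N) :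
    D (curv D Br φ) = (1 / 2 : ℂ) • (Br (curv D Br φ) φ - Br φ (curv D Br φ)) := by
  obtain ⟨t1, t2⟩ := triple hBr hφ
  have h1 := D_sq hD hφ
  have h2 := D_Br hD hBr hφ hφ
  rw [sgn_one, vs_neg_one] at h2
  simp only [curv, map_add, map_smul, LinearMap.add_apply, LinearMap.smul_apply, h1, h2, t1, t2,
    smul_zero, add_zero, zero_add, sub_eq_add_neg]

theorem curv_sub (φ g : VV Ω L A) : curv D Br (φ - g) = curv D Br φ - D g
    - (1 / 2 : ℂ) • Br φ g - (1 / 2 : ℂ) • Br g φ + (1 / 2 : ℂ) • Br g g := by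
  simp only [curv, map_sub, LinearMap.sub_apply]
  module
end curv

end Core

set_option linter.unusedSectionVars false
set_option linter.unusedSimpArgs false

section Fill
variable {L : GradedDGLA} {A : Type} [CommRing A] [Algebra ℂ A]
variable {n : ℕ} {Ω : SimplexForms (n + 1)} {Ω' : SimplexForms n}

theorem lT_comp {l m r : ℕ} {Ω₁ : SimplexForms l} {Ω₂ : SimplexForms m} {Ω₃ : SimplexForms r}
    (g : Ω₂.A →ₐ[ℂ] Ω₃.A) (f : Ω₁.A →ₐ[ℂ] Ω₂.A) (v : VV Ω₁ L A) :
    lT L A (g.comp f).toLinearMap v = lT L A g.toLinearMap (lT L A f.toLinearMap v) := by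
  rw [AlgHom.comp_toLinearMap]
  exact LinearMap.lTensor_comp_apply _ _ _ _

/-- Powers of the maximal ideal as complex subspaces. -/
noncomputable def mp (A : Type) [CommRing A] [Algebra ℂ A] [IsLocalRing A] (j : ℕ) :
    Submodule ℂ A := (IsLocalRing.maximalIdeal A ^ j).restrictScalars ℂ

theorem mp_le [IsLocalRing A] {i j : ℕ} (h : i ≤ j) : mp A j ≤ mp A i :=
  fun _ hx => Ideal.pow_le_pow_right h hx

theorem mp_mul [IsLocalRing A] {i j k : ℕ} (h : k ≤ i + j) (a : A) (ha : a ∈ mp A i) (b : A)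
    (hb : b ∈ mp A j) : a * b ∈ mp A k := by
  refine mp_le h ?_
  change a * b ∈ IsLocalRing.maximalIdeal A ^ (i + j)
  rw [pow_add]
  exact Ideal.mul_mem_mul ha hb

set_option maxHeartbeats 1000000 in
theorem mc_correct [IsLocalRing A] [IsArtinianRing A]
    (hΩ : IsPolyDeRham Ω) (hΩ' : IsPolyDeRham Ω')
    (pb : Fin (n + 2) → (Ω.A →ₐ[ℂ] Ω'.A))
    (hpb : ∀ i, PullbackProp Ω Ω' (Fin.succAbove i) (pb i))
    {D : VV Ω L A →ₗ[ℂ] VV Ω L A} (hD : IsDiff D)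
    {Br : VV Ω L A →ₗ[ℂ] VV Ω L A →ₗ[ℂ] VV Ω L A} (hBr : IsBr Br)
    {D' : VV Ω' L A →ₗ[ℂ] VV Ω' L A} (hD' : IsDiff D')
    {Br' : VV Ω' L A →ₗ[ℂ] VV Ω' L A →ₗ[ℂ] VV Ω' L A} (hBr' : IsBr Br')
    (k : Fin (n + 2)) (ψ : ∀ i, i ≠ k → VV Ω' L A) (hψ : ∀ i hi, curv D' Br' (ψ i hi) = 0)
    (φ₀ : VV Ω L A) (hφ₀ : φ₀ ∈ WW Ω L 1 (mp A 1))
    (hr : ∀ i hi, lT L A (pb i).toLinearMap φ₀ = ψ i hi) :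
    ∃ φ ∈ WW Ω L 1 (mp A 1), curv D Br φ = 0 ∧
      ∀ i hi, lT L A (pb i).toLinearMap φ = ψ i hi := by
  have step : ∀ j : ℕ, ∃ φ ∈ WW Ω L 1 (mp A 1), curv D Br φ ∈ WW Ω L 2 (mp A (j + 1)) ∧
      ∀ i hi, lT L A (pb i).toLinearMap φ = ψ i hi := by
    intro j
    induction j with
    | zero =>
      refine ⟨φ₀, hφ₀, ?_, hr⟩
      exact Submodule.add_mem _ (D_mem hD (by norm_num) hφ₀) (Submodule.smul_mem _ _
        (Br_mem hBr (by norm_num) (mp_mul (by omega)) hφ₀ hφ₀))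
    | succ j ih =>
      obtain ⟨φ, hφ, hc, hr⟩ := ih
      -- the curvature vanishes on the faces of the horn
      have hface : ∀ i (hi : i ≠ k), lT L A (pb i).toLinearMap (curv D Br φ) = 0 := by
        intro i hi
        rw [← hψ i hi, ← hr i hi]
        have hdg : IsDga Ω Ω' (pb i) := ⟨(hpb i).1, (hpb i).2.1⟩
        simp only [curv, map_add, map_smul]
        rw [D_natural hdg hD hD' hφ, Br_natural hdg hBr hBr' hφ hφ]
      obtain ⟨e, he⟩ := pullback_exists hΩ Ω (fun _ => k)
      have hek : lT L A e.toLinearMap (curv D Br φ) = 0 := by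
        obtain ⟨i, hi⟩ := exists_ne k
        obtain ⟨l, hl⟩ := Fin.exists_succAbove_eq hi.symm
        obtain ⟨c, hc⟩ := pullback_exists hΩ' Ω (fun _ => l)
        have hcomp := pullback_comp (hpb i) hc
        have hfun : Fin.succAbove i ∘ (fun _ : Fin (n + 1 + 1) => l) = fun _ => k := by
          funext _; exact hl
        rw [hfun] at hcomp
        have hee := pullback_unique hΩ he hcomp
        have : lT L A e.toLinearMap (curv D Br φ) = lT L A c.toLinearMap
            (lT L A (pb i).toLinearMap (curv D Br φ)) := by
          rw [hee, lT_comp]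
        rw [this, hface i hi, map_zero]
      set c := curv D Br φ with hcdef
      set g := lT L A (htyS hΩ k) c with hg
      have hgm : g ∈ WW Ω L 1 (mp A (j + 1)) := GG_mem hΩ k (by norm_num) hc
      have hgm' : g ∈ WW Ω L 1 (mp A 1) := WW_mono (mp_le (by omega)) hgm
      refine ⟨φ - g, Submodule.sub_mem _ hφ hgm', ?_, ?_⟩
      · have hDg := GG_homotopy hΩ hD k he hc
        rw [hek, sub_zero, bianchi hD hBr hφ, ← hcdef, ← hg] at hDg
        rw [curv_sub, ← hcdef, hDg]
        have m1 : lT L A (htyS hΩ k) ((1 / 2 : ℂ) • (Br c φ - Br φ c)) ∈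
            WW Ω L 2 (mp A (j + 1 + 1)) := by
          refine GG_mem hΩ k (d := 3) (by norm_num) (Submodule.smul_mem _ _
            (Submodule.sub_mem _ ?_ ?_))
          · exact Br_mem hBr (by norm_num) (mp_mul (by omega)) hc hφ
          · exact Br_mem hBr (by norm_num) (mp_mul (by omega)) hφ hc
        have m2 : Br φ g ∈ WW Ω L 2 (mp A (j + 1 + 1)) :=
          Br_mem hBr (by norm_num) (mp_mul (by omega)) hφ hgm
        have m3 : Br g φ ∈ WW Ω L 2 (mp A (j + 1 + 1)) :=
          Br_mem hBr (by norm_num) (mp_mul (by omega)) hgm hφ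
        have m4 : Br g g ∈ WW Ω L 2 (mp A (j + 1 + 1)) :=
          Br_mem hBr (by norm_num) (mp_mul (by omega)) hgm hgm'
        rw [sub_add_cancel_right]
        exact Submodule.add_mem _ (Submodule.sub_mem _ (Submodule.sub_mem _
          (Submodule.neg_mem _ m1) (Submodule.smul_mem _ _ m2)) (Submodule.smul_mem _ _ m3))
          (Submodule.smul_mem _ _ m4)
      · intro i hi
        obtain ⟨l, hl⟩ := Fin.exists_succAbove_eq hi.symm
        have hnat : (pb i).toLinearMap ∘ₗ htyS hΩ k = htyS hΩ' l ∘ₗ (pb i).toLinearMap := by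
          ext y
          simp only [htyS, LinearMap.comp_apply, AlgHom.toLinearMap_apply]
          rw [hty_natural hΩ hΩ' (hpb i) k l hl]
          congr 1
          exact (sigL_comm Ω.grading Ω'.grading (pb i).toLinearMap (hpb i).2.1 y).symm
        have : lT L A (pb i).toLinearMap g = 0 := by
          have h1 : lT L A (pb i).toLinearMap g =
              lT L A ((pb i).toLinearMap ∘ₗ htyS hΩ k) c :=
            (LinearMap.lTensor_comp_apply _ _ _ _).symm
          have h2 : lT L A (htyS hΩ' l ∘ₗ (pb i).toLinearMap) c =
              lT L A (htyS hΩ' l) (lT L A (pb i).toLinearMap c) :=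
            LinearMap.lTensor_comp_apply _ _ _ _
          rw [h1, hnat, h2, hface i hi, map_zero]
        rw [map_sub, this, sub_zero, hr i hi]
  obtain ⟨N, hN⟩ := IsArtinianRing.isNilpotent_jacobson_bot (R := A)
  rw [IsLocalRing.jacobson_eq_maximalIdeal ⊥ bot_ne_top] at hN
  obtain ⟨φ, hφ, hc, hr⟩ := step N
  refine ⟨φ, hφ, WW_bot (WW_mono ?_ hc), hr⟩
  intro x hx
  have hxN : x ∈ IsLocalRing.maximalIdeal A ^ N := Ideal.pow_le_pow_right (Nat.le_succ N) hx
  rw [hN] at hxN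
  exact hxN

/-- linear horn filling -/
theorem lin_fill (hΩ : IsPolyDeRham Ω) (hΩ' : IsPolyDeRham Ω')
    (pb : Fin (n + 2) → (Ω.A →ₐ[ℂ] Ω'.A))
    (hpb : ∀ i, PullbackProp Ω Ω' (Fin.succAbove i) (pb i)) (N : Submodule ℂ A)
    (k : Fin (n + 2)) (ψ : ∀ i, i ≠ k → VV Ω' L A) (hψ : ∀ i hi, ψ i hi ∈ WW Ω' L 1 N)
    (hcompat : ∀ i j (hi : i ≠ k) (hj : j ≠ k), i ≠ j → ∀ (a b : Fin (n + 1) → Fin (n + 1))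
      (f g : Ω'.A →ₐ[ℂ] Ω'.A), Fin.succAbove i ∘ a = Fin.succAbove j ∘ b →
      PullbackProp Ω' Ω' a f → PullbackProp Ω' Ω' b g →
      lT L A f.toLinearMap (ψ i hi) = lT L A g.toLinearMap (ψ j hj)) :
    ∃ φ ∈ WW Ω L 1 N, ∀ i hi, lT L A (pb i).toLinearMap φ = ψ i hi := by
  classical
  suffices h : ∀ S : Finset (Fin (n + 2)), ∃ φ ∈ WW Ω L 1 N,
      ∀ i ∈ S, ∀ hi, lT L A (pb i).toLinearMap φ = ψ i hi by
    obtain ⟨φ, h1, h2⟩ := h Finset.univ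
    exact ⟨φ, h1, fun i hi => h2 i (Finset.mem_univ i) hi⟩
  intro S
  induction S using Finset.induction_on with
  | empty => exact ⟨0, Submodule.zero_mem _, by simp⟩
  | insert i S hiS ih =>
    obtain ⟨φ, hφ, hS⟩ := ih
    by_cases hik : i = k
    · refine ⟨φ, hφ, fun j hj hjk => ?_⟩
      rcases Finset.mem_insert.1 hj with rfl | hj
      · exact absurd hik hjk
      · exact hS j hj hjk
    obtain ⟨l, hl⟩ := Fin.exists_succAbove_eq (Ne.symm hik)
    have hex : ∀ v : Fin (n + 2), ∃ w : Fin (n + 1), i.succAbove w = if v = i then k else v := by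
      intro v
      apply Fin.exists_succAbove_eq
      split_ifs with h
      · exact Ne.symm hik
      · exact h
    choose r hr using hex
    obtain ⟨R, hR⟩ := pullback_exists hΩ' Ω r
    have hmem : ψ i hik - lT L A (pb i).toLinearMap φ ∈ WW Ω' L 1 N :=
      Submodule.sub_mem _ (hψ i hik) (lTensor_mem_WW (hpb i).2.1 hφ)
    refine ⟨φ + lT L A R.toLinearMap (ψ i hik - lT L A (pb i).toLinearMap φ),
      Submodule.add_mem _ hφ (lTensor_mem_WW hR.2.1 hmem), fun j hj hjk => ?_⟩
    by_cases hji : j = i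
    · subst hji
      have h1 := pullback_comp hR (hpb j)
      have hid : r ∘ Fin.succAbove j = id := by
        funext v
        apply Fin.succAbove_right_injective (p := j)
        simp [hr, Fin.succAbove_ne]
      rw [hid] at h1
      have h2 := pullback_unique hΩ' h1 (pullback_id Ω')
      have h3 : ∀ v : VV Ω' L A, lT L A (pb j).toLinearMap (lT L A R.toLinearMap v) = v := by
        intro v
        have e1 : lT L A (pb j).toLinearMap (lT L A R.toLinearMap v) =
          lT L A ((pb j).comp R).toLinearMap v := (LinearMap.lTensor_comp_apply _ _ _ _).symm
        rw [e1, h2]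
        exact LinearMap.congr_fun (LinearMap.lTensor_id _ _) v
      rw [map_add, h3]
      abel
    · have hjS : j ∈ S := (Finset.mem_insert.1 hj).resolve_left hji
      -- the map `a = r ∘ δ_j`
      have hex2 : ∀ v : Fin (n + 1), ∃ w : Fin (n + 1),
          j.succAbove w = i.succAbove (r (j.succAbove v)) := by
        intro v
        apply Fin.exists_succAbove_eq
        rw [hr]
        split_ifs with h
        · exact Ne.symm hjk
        · exact Fin.succAbove_ne j v
      choose b hb using hex2
      obtain ⟨B, hB⟩ := pullback_exists hΩ' Ω' b
      have hC := pullback_comp hR (hpb j)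
      have hab : Fin.succAbove i ∘ (r ∘ Fin.succAbove j) = Fin.succAbove j ∘ b := by
        funext v
        exact (hb v).symm
      have c1 := hcompat i j hik hjk (Ne.symm hji) _ _ _ _ hab hC hB
      have p1 := pullback_comp (hpb i) hC
      have p2 := pullback_comp (hpb j) hB
      rw [hab] at p1
      have p3 := pullback_unique hΩ p1 p2
      have e1 : ∀ v : VV Ω' L A, lT L A (pb j).toLinearMap (lT L A R.toLinearMap v) =
          lT L A ((pb j).comp R).toLinearMap v :=
        fun v => (LinearMap.lTensor_comp_apply _ _ _ _).symm
      have e2 : lT L A ((pb j).comp R).toLinearMap (lT L A (pb i).toLinearMap φ) =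
          lT L A (((pb j).comp R).comp (pb i)).toLinearMap φ :=
        (LinearMap.lTensor_comp_apply _ _ _ _).symm
      have e3 : lT L A B.toLinearMap (lT L A (pb j).toLinearMap φ) =
          lT L A (B.comp (pb j)).toLinearMap φ :=
        (LinearMap.lTensor_comp_apply _ _ _ _).symm
      rw [map_add, e1, map_sub, c1, e2, p3, ← e3, hS j hjS hjk, sub_self, add_zero]

theorem fill [IsLocalRing A] [IsArtinianRing A]
    (hΩ : IsPolyDeRham Ω) (hΩ' : IsPolyDeRham Ω')
    (pb : Fin (n + 2) → (Ω.A →ₐ[ℂ] Ω'.A))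
    (hpb : ∀ i, PullbackProp Ω Ω' (Fin.succAbove i) (pb i))
    {D : VV Ω L A →ₗ[ℂ] VV Ω L A} (hD : IsDiff D)
    {Br : VV Ω L A →ₗ[ℂ] VV Ω L A →ₗ[ℂ] VV Ω L A} (hBr : IsBr Br)
    {D' : VV Ω' L A →ₗ[ℂ] VV Ω' L A} (hD' : IsDiff D')
    {Br' : VV Ω' L A →ₗ[ℂ] VV Ω' L A →ₗ[ℂ] VV Ω' L A} (hBr' : IsBr Br')
    (k : Fin (n + 2)) (ψ : ∀ i, i ≠ k → VV Ω' L A) (hψ : ∀ i hi, curv D' Br' (ψ i hi) = 0)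
    (hψm : ∀ i hi, ψ i hi ∈ WW Ω' L 1 (mp A 1))
    (hcompat : ∀ i j (hi : i ≠ k) (hj : j ≠ k), i ≠ j → ∀ (a b : Fin (n + 1) → Fin (n + 1))
      (f g : Ω'.A →ₐ[ℂ] Ω'.A), Fin.succAbove i ∘ a = Fin.succAbove j ∘ b →
      PullbackProp Ω' Ω' a f → PullbackProp Ω' Ω' b g →
      lT L A f.toLinearMap (ψ i hi) = lT L A g.toLinearMap (ψ j hj)) :
    ∃ φ ∈ WW Ω L 1 (mp A 1), curv D Br φ = 0 ∧
      ∀ i hi, lT L A (pb i).toLinearMap φ = ψ i hi := by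
  obtain ⟨φ₀, h1, h2⟩ := lin_fill hΩ hΩ' pb hpb (mp A 1) k ψ hψm hcompat
  exact mc_correct hΩ hΩ' pb hpb hD hBr hD' hBr' k ψ hψ φ₀ h1 h2
end Fill

set_option linter.unusedSectionVars false
set_option linter.unusedSimpArgs false

theorem face_identity {n : ℕ} (i j : Fin (n + 3)) (hij : i < j) (w : Fin (n + 1)) :
    i.succAbove ((⟨j.1 - 1, by have := j.isLt; omega⟩ : Fin (n + 2)).succAbove w) =
      j.succAbove ((⟨i.1, by have := j.isLt; omega⟩ : Fin (n + 2)).succAbove w) := by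
  rw [Fin.lt_def] at hij
  ext
  simp only [Fin.succAbove, Fin.lt_def]
  split_ifs <;> simp_all <;> omega

theorem compat_aux {L : GradedDGLA} {A : Type} [CommRing A] [Algebra ℂ A] {n : ℕ}
    {Ω : SimplexForms (n + 1)} {Ω' : SimplexForms n} (hΩ : IsPolyDeRham Ω)
    (hΩ' : IsPolyDeRham Ω') (pb : Fin (n + 2) → (Ω.A →ₐ[ℂ] Ω'.A))
    (hpb : ∀ i, PullbackProp Ω Ω' (Fin.succAbove i) (pb i))
    (i j : Fin (n + 3)) (hij : i < j) (a b : Fin (n + 2) → Fin (n + 2)) (f g : Ω.A →ₐ[ℂ] Ω.A)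
    (hab : Fin.succAbove i ∘ a = Fin.succAbove j ∘ b) (hf : PullbackProp Ω Ω a f)
    (hg : PullbackProp Ω Ω b g) (u v : VV Ω L A)
    (huv : lT L A (pb ⟨i.1, by have := j.isLt; omega⟩).toLinearMap v =
      lT L A (pb ⟨j.1 - 1, by have := j.isLt; omega⟩).toLinearMap u) :
    lT L A f.toLinearMap u = lT L A g.toLinearMap v := by
  have hex : ∀ w, ∃ z : Fin (n + 1),
      (⟨j.1 - 1, by have := j.isLt; omega⟩ : Fin (n + 2)).succAbove z = a w := by
    intro w
    apply Fin.exists_succAbove_eq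
    intro h
    have h1 := congrFun hab w
    simp only [Function.comp, h] at h1
    refine Fin.succAbove_ne j (b w) (h1.symm.trans ?_)
    rw [Fin.lt_def] at hij
    ext
    simp only [Fin.succAbove, Fin.lt_def]
    split_ifs <;> simp_all <;> omega
  choose c hc using hex
  obtain ⟨C, hC⟩ := pullback_exists hΩ' Ω c
  have ha : a = Fin.succAbove ⟨j.1 - 1, by have := j.isLt; omega⟩ ∘ c := by
    funext w; exact (hc w).symm
  have hb : b = Fin.succAbove ⟨i.1, by have := j.isLt; omega⟩ ∘ c := by
    funext w
    apply Fin.succAbove_right_injective (p := j)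
    have h1 := congrFun hab w
    simp only [Function.comp] at h1 ⊢
    rw [← h1, ← hc w, face_identity i j hij]
  subst ha hb
  rw [pullback_unique hΩ hf (pullback_comp (hpb _) hC),
    pullback_unique hΩ hg (pullback_comp (hpb _) hC), lT_comp, lT_comp, huv]

/-- (Hinich–Getzler.)  For a dgLa `L` over ℂ and a local
Artinian ℂ-algebra `A` with maximal ideal `m_A`, the simplicial set
`n ↦ MC(L ⊗ m_A ⊗ A^*(Δ_n))` is a Kan complex: every horn (of dimension 1, or
of dimension `n+2` with the pairwise face compatibilities) of Maurer–Cartan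
elements extends to a Maurer–Cartan element on the full simplex. -/
theorem mc_simplicial_kan
    (F : ∀ k, SimplexForms k) (hF : ∀ k, IsPolyDeRham (F k))
    (pb : ∀ (k : ℕ) (i : Fin (k + 2)), (F (k + 1)).A →ₐ[ℂ] (F k).A)
    (hpb : ∀ (k : ℕ) (i : Fin (k + 2)),
      PullbackProp (F (k + 1)) (F k) (Fin.succAbove i) (pb k i))
    (L : GradedDGLA)
    (A : Type) [CommRing A] [Algebra ℂ A] [IsArtinianRing A] [IsLocalRing A]
    -- the differential of L ⊗ m_A ⊗ A^*(Δ_k)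
    (D : ∀ k, (L.L ⊗[ℂ] A) ⊗[ℂ] (F k).A →ₗ[ℂ] (L.L ⊗[ℂ] A) ⊗[ℂ] (F k).A)
    (hD : ∀ (k : ℕ) (p : ℤ) (q : ℕ) (x : L.L) (a : A) (α : (F k).A),
      x ∈ L.gr p → α ∈ (F k).grading q →
      D k ((x ⊗ₜ a) ⊗ₜ α) =
        ((L.dL x ⊗ₜ a) ⊗ₜ α) + sgn p • ((x ⊗ₜ a) ⊗ₜ ((F k).d α)))
    -- the bracket of L ⊗ m_A ⊗ A^*(Δ_k)
    (Br : ∀ k, (L.L ⊗[ℂ] A) ⊗[ℂ] (F k).A →ₗ[ℂ]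
      (L.L ⊗[ℂ] A) ⊗[ℂ] (F k).A →ₗ[ℂ] (L.L ⊗[ℂ] A) ⊗[ℂ] (F k).A)
    (hBr : ∀ (k : ℕ) (p p' : ℤ) (q q' : ℕ) (x y : L.L) (a b : A)
        (α β : (F k).A), x ∈ L.gr p → y ∈ L.gr p' →
      α ∈ (F k).grading q → β ∈ (F k).grading q' →
      Br k ((x ⊗ₜ a) ⊗ₜ α) ((y ⊗ₜ b) ⊗ₜ β) =
        sgn ((q : ℤ) * p') • ((L.br x y ⊗ₜ (a * b)) ⊗ₜ (α * β))) :
    -- horn filling in dimension 1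
    (∀ (k : Fin 2) (ψ : ∀ i : Fin 2, i ≠ k → (L.L ⊗[ℂ] A) ⊗[ℂ] (F 0).A),
      (∀ (i : Fin 2) (hi : i ≠ k),
        IsMCsimp F L A ((IsLocalRing.maximalIdeal A).restrictScalars ℂ) D Br 0
          (ψ i hi)) →
      ∃ φ : (L.L ⊗[ℂ] A) ⊗[ℂ] (F 1).A,
        IsMCsimp F L A ((IsLocalRing.maximalIdeal A).restrictScalars ℂ) D Br 1 φ ∧
        ∀ (i : Fin 2) (hi : i ≠ k),
          LinearMap.lTensor (L.L ⊗[ℂ] A) (pb 0 i).toLinearMap φ = ψ i hi) ∧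
    -- horn filling in dimension n + 2
    (∀ (n : ℕ) (k : Fin (n + 3))
        (ψ : ∀ i : Fin (n + 3), i ≠ k → (L.L ⊗[ℂ] A) ⊗[ℂ] (F (n + 1)).A),
      (∀ (i : Fin (n + 3)) (hi : i ≠ k),
        IsMCsimp F L A ((IsLocalRing.maximalIdeal A).restrictScalars ℂ) D Br
          (n + 1) (ψ i hi)) →
      (∀ (i j : Fin (n + 3)) (hi : i ≠ k) (hj : j ≠ k) (hij : i.1 < j.1),
        LinearMap.lTensor (L.L ⊗[ℂ] A)
            (pb n ⟨i.1, by have := j.isLt; omega⟩).toLinearMap (ψ j hj) =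
          LinearMap.lTensor (L.L ⊗[ℂ] A)
            (pb n ⟨j.1 - 1, by have := j.isLt; omega⟩).toLinearMap (ψ i hi)) →
      ∃ φ : (L.L ⊗[ℂ] A) ⊗[ℂ] (F (n + 2)).A,
        IsMCsimp F L A ((IsLocalRing.maximalIdeal A).restrictScalars ℂ) D Br
          (n + 2) φ ∧
        ∀ (i : Fin (n + 3)) (hi : i ≠ k),
          LinearMap.lTensor (L.L ⊗[ℂ] A) (pb (n + 1) i).toLinearMap φ = ψ i hi) := by
  have hD' : ∀ k, IsDiff (Ω := F k) (L := L) (A := A) (D k) := fun k => hD k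
  have hBr' : ∀ k, IsBr (Ω := F k) (L := L) (A := A) (Br k) := fun k => hBr k
  have hm : (IsLocalRing.maximalIdeal A).restrictScalars ℂ = mp A 1 := by
    rw [mp, pow_one]
  simp only [IsMCsimp, Deg1m_eq, hm]
  refine ⟨fun k ψ hψ => ?_, fun n k ψ hψ hc => ?_⟩
  · obtain ⟨φ, h1, h2, h3⟩ := fill (hF 1) (hF 0) (pb 0) (hpb 0) (hD' 1) (hBr' 1) (hD' 0) (hBr' 0)
      k ψ (fun i hi => (hψ i hi).2) (fun i hi => (hψ i hi).1)
      (fun i j hi hj hij => absurd (by omega) hij)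
    exact ⟨φ, ⟨h1, h2⟩, h3⟩
  · obtain ⟨φ, h1, h2, h3⟩ := fill (hF (n + 2)) (hF (n + 1)) (pb (n + 1)) (hpb (n + 1))
      (hD' (n + 2)) (hBr' (n + 2)) (hD' (n + 1)) (hBr' (n + 1))
      k ψ (fun i hi => (hψ i hi).2) (fun i hi => (hψ i hi).1) (by
        intro i j hi hj hij a b f g hab hf hg
        rcases lt_or_gt_of_ne hij with h | h
        · exact compat_aux (hF (n + 1)) (hF n) (pb n) (hpb n) i j h a b f g hab hf hg
            (ψ i hi) (ψ j hj) (hc i j hi hj h)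
        · exact (compat_aux (hF (n + 1)) (hF n) (pb n) (hpb n) j i h b a g f hab.symm hg hf
            (ψ j hj) (ψ i hi) (hc j i hj hi h)).symm)
    exact ⟨φ, ⟨h1, h2⟩, h3⟩
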